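/- If X is a 1-dimensional hereditarily indecomposable Hausdorff continuum, then either the hyperspace C(X) has covering dimension 2, or C(X) is not a C-space. -/

import Mathlib

open Set TopologicalSpace FirstOrder

universe u v

/-- `U` is a cover of `X` by open sets. -/
def IsOpenCover {X : Type u} [TopologicalSpace X] (U : Set (Set X)) : Prop :=
  (∀ s ∈ U, IsOpen s) ∧ ⋃₀ U = Set.univ

/-- `V` refines `U`: every member of `V` is contained in some member of `U`. -/
def Refines {X : Type u} (V U : Set (Set X)) : Prop :=
  ∀ v ∈ V, ∃ u ∈ U, v ⊆ u

/-- `X` is a C-space (has property C): every sequence of open covers admits a sequence of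
families of pairwise disjoint open sets, the `i`-th refining the `i`-th cover, whose union
covers `X`. -/
def IsCSpace (X : Type u) [TopologicalSpace X] : Prop :=
  ∀ U : ℕ → Set (Set X), (∀ i, IsOpenCover (U i)) →
    ∃ V : ℕ → Set (Set X),
      (∀ i, (∀ s ∈ V i, IsOpen s) ∧ (V i).PairwiseDisjoint id ∧ Refines (V i) (U i)) ∧
      (⋃ i, ⋃₀ (V i)) = Set.univ

/-- `X` is an `m`-C-space: property C restricted to `m`-element open covers. -/
def IsMCSpace (m : ℕ) (X : Type u) [TopologicalSpace X] : Prop :=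
  ∀ U : ℕ → Fin m → Set X, (∀ i j, IsOpen (U i j)) → (∀ i, (⋃ j, U i j) = Set.univ) →
    ∃ V : ℕ → Set (Set X),
      (∀ i, (∀ s ∈ V i, IsOpen s) ∧ (V i).PairwiseDisjoint id ∧ ∀ v ∈ V i, ∃ j, v ⊆ U i j) ∧
      (⋃ i, ⋃₀ (V i)) = Set.univ

/-- Covering dimension at most `n`: every finite open cover has a finite open refinement
of order at most `n + 1`. -/
def CovDimLE (X : Type u) [TopologicalSpace X] (n : ℕ) : Prop :=
  ∀ U : Set (Set X), U.Finite → IsOpenCover U →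
    ∃ V : Set (Set X), V.Finite ∧ IsOpenCover V ∧ Refines V U ∧
      ∀ x : X, {v ∈ V | x ∈ v}.ncard ≤ n + 1

/-- The covering dimension, as an extended natural number (`⊤` if infinite dimensional). -/
noncomputable def covDim (X : Type u) [TopologicalSpace X] : ℕ∞ :=
  sInf ((fun n : ℕ => (n : ℕ∞)) '' {n : ℕ | CovDimLE X n})

/-- The hyperspace `C(X)` of subcontinua (nonempty closed connected subsets) of `X`. -/
def Subcontinua (X : Type u) [TopologicalSpace X] : Type u :=
  {A : Set X // IsClosed A ∧ IsConnected A}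

/-- The Vietoris topology on the hyperspace of subcontinua. -/
instance Subcontinua.instTopologicalSpace (X : Type u) [TopologicalSpace X] :
    TopologicalSpace (Subcontinua X) :=
  TopologicalSpace.generateFrom
    ({s | ∃ U : Set X, IsOpen U ∧ s = {A : Subcontinua X | A.1 ⊆ U}} ∪
     {s | ∃ U : Set X, IsOpen U ∧ s = {A : Subcontinua X | (A.1 ∩ U).Nonempty}})

/-- `X` is hereditarily indecomposable: any two subcontinua are comparable or disjoint. -/
def HereditarilyIndecomposable (X : Type u) [TopologicalSpace X] : Prop :=
  ∀ A B : Set X, IsClosed A → IsConnected A → IsClosed B → IsConnected B →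
    A ⊆ B ∨ B ⊆ A ∨ A ∩ B = ∅


set_option linter.unusedSectionVars false
set_option linter.deprecated false

namespace HS

section basic
variable {X : Type u} [TopologicalSpace X]

/-- maximum of a function on a subcontinuum -/
noncomputable def mx (φ : C(X, ℝ)) (A : Subcontinua X) : ℝ := sSup (φ '' A.1)

theorem isOpen_sub {U : Set X} (hU : IsOpen U) : IsOpen {A : Subcontinua X | A.1 ⊆ U} :=
  TopologicalSpace.isOpen_generateFrom_of_mem (Or.inl ⟨U, hU, rfl⟩)

theorem isOpen_meet {U : Set X} (hU : IsOpen U) :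
    IsOpen {A : Subcontinua X | (A.1 ∩ U).Nonempty} :=
  TopologicalSpace.isOpen_generateFrom_of_mem (Or.inr ⟨U, hU, rfl⟩)

theorem isClosed_meet {C : Set X} (hC : IsClosed C) :
    IsClosed {A : Subcontinua X | (A.1 ∩ C).Nonempty} := by
  have := isOpen_sub (X := X) hC.isOpen_compl
  rw [← isOpen_compl_iff]
  convert this using 1
  ext A
  simp [Set.not_nonempty_iff_eq_empty, ← Set.disjoint_iff_inter_eq_empty,
    Set.subset_compl_iff_disjoint_right]

variable [CompactSpace X] [T2Space X]

/-- underlying compact set -/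
def toC (A : Subcontinua X) : Compacts X := ⟨A.1, A.2.1.isCompact⟩

theorem isEmbedding_toC : Topology.IsEmbedding (toC : Subcontinua X → Compacts X) := by
  refine ⟨⟨?_⟩, ?_⟩
  · let _ : TopologicalSpace (Set X) := TopologicalSpace.vietoris X
    have h0 := (Compacts.isEmbedding_coe (α := X)).eq_induced
    rw [h0, induced_compose]
    change _ = TopologicalSpace.induced _ (TopologicalSpace.vietoris X)
    unfold TopologicalSpace.vietoris
    rw [induced_generateFrom_eq]
    unfold Subcontinua.instTopologicalSpace
    congr 1
    ext s
    simp only [mem_union, mem_setOf_eq, mem_image]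
    constructor
    · rintro (⟨U, hU, rfl⟩ | ⟨U, hU, rfl⟩)
      · exact ⟨U.powerset, Or.inl ⟨U, hU, rfl⟩, rfl⟩
      · exact ⟨_, Or.inr ⟨U, hU, rfl⟩, rfl⟩
    · rintro ⟨t, (⟨U, hU, rfl⟩ | ⟨U, hU, rfl⟩), rfl⟩
      · exact Or.inl ⟨U, hU, rfl⟩
      · exact Or.inr ⟨U, hU, rfl⟩
  · intro A B h
    apply Subtype.ext
    exact congrArg (fun K : Compacts X => (K : Set X)) h

theorem isClosed_range_toC : IsClosed (Set.range (toC : Subcontinua X → Compacts X)) := by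
  rw [← isOpen_compl_iff, isOpen_iff_forall_mem_open]
  intro K hK
  have hK' : ¬ IsConnected (K : Set X) := by
    intro h
    exact hK ⟨⟨K, K.isCompact.isClosed, h⟩, Compacts.ext rfl⟩
  by_cases hne : (K : Set X).Nonempty
  · have hp : ¬ IsPreconnected (K : Set X) := fun h => hK' ⟨hne, h⟩
    rw [isPreconnected_closed_iff] at hp
    push Not at hp
    obtain ⟨a, b, ha, hb, hab, hKa, hKb, hKab⟩ := hp
    have hd : Disjoint ((K : Set X) ∩ a) ((K : Set X) ∩ b) := by
      rw [Set.disjoint_iff_inter_eq_empty, ← hKab]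
      ext x; simp; tauto
    obtain ⟨U, V, hU, hV, haU, hbV, hUV⟩ := normal_separation
      (K.isCompact.isClosed.inter ha) (K.isCompact.isClosed.inter hb) hd
    refine ⟨{L | (L : Set X) ⊆ U ∪ V} ∩ {L | ((L : Set X) ∩ U).Nonempty} ∩
      {L | ((L : Set X) ∩ V).Nonempty}, ?_, ?_, ?_⟩
    · rintro L ⟨⟨h1, h2⟩, h3⟩ ⟨A, rfl⟩
      have := A.2.2.2 U V hU hV h1 h2 h3
      obtain ⟨x, hx, hx1, hx2⟩ := this
      exact Set.disjoint_left.1 hUV hx1 hx2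
    · exact ((Compacts.isOpen_subsets_of_isOpen (hU.union hV)).inter
        (Compacts.isOpen_inter_nonempty_of_isOpen hU)).inter
        (Compacts.isOpen_inter_nonempty_of_isOpen hV)
    · refine ⟨⟨?_, ?_⟩, ?_⟩
      · intro x hx
        rcases hab hx with h | h
        · exact Or.inl (haU ⟨hx, h⟩)
        · exact Or.inr (hbV ⟨hx, h⟩)
      · obtain ⟨x, hx⟩ := hKa
        exact ⟨x, hx.1, haU hx⟩
      · obtain ⟨x, hx⟩ := hKb
        exact ⟨x, hx.1, hbV hx⟩
  · refine ⟨{⊥}, ?_, Compacts.isClopen_singleton_bot.2, ?_⟩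
    · rintro L hL ⟨A, rfl⟩
      have h := A.2.2.1
      have : (toC A : Set X) = ∅ := by rw [Set.mem_singleton_iff.1 hL]; rfl
      rw [← Set.not_nonempty_iff_eq_empty] at this
      exact this h
    · rw [Set.mem_singleton_iff]
      apply Compacts.ext
      rw [Set.not_nonempty_iff_eq_empty] at hne
      rw [hne]; rfl

instance instCompactH : CompactSpace (Subcontinua X) :=
  (Topology.IsClosedEmbedding.mk isEmbedding_toC isClosed_range_toC).compactSpace

instance instT2H : T2Space (Subcontinua X) := isEmbedding_toC.t2Space

theorem exists_mx (φ : C(X, ℝ)) (A : Subcontinua X) : ∃ x ∈ A.1, φ x = mx φ A := by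
  have := (A.2.1.isCompact.image φ.continuous).sSup_mem (A.2.2.1.image _)
  exact this

theorem le_mx (φ : C(X, ℝ)) (A : Subcontinua X) {x : X} (hx : x ∈ A.1) : φ x ≤ mx φ A :=
  le_csSup (A.2.1.isCompact.image φ.continuous).bddAbove ⟨x, hx, rfl⟩

theorem mx_lt_iff (φ : C(X, ℝ)) (A : Subcontinua X) (c : ℝ) :
    mx φ A < c ↔ ∀ x ∈ A.1, φ x < c := by
  constructor
  · intro h x hx
    exact (le_mx φ A hx).trans_lt h
  · intro h
    obtain ⟨x, hx, h1⟩ := exists_mx φ A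
    rw [← h1]; exact h x hx

theorem lt_mx_iff (φ : C(X, ℝ)) (A : Subcontinua X) (c : ℝ) :
    c < mx φ A ↔ ∃ x ∈ A.1, c < φ x := by
  constructor
  · intro h
    obtain ⟨x, hx, h1⟩ := exists_mx φ A
    exact ⟨x, hx, h1 ▸ h⟩
  · rintro ⟨x, hx, h⟩
    exact h.trans_le (le_mx φ A hx)

theorem mx_mono (φ : C(X, ℝ)) {A B : Subcontinua X} (h : A.1 ⊆ B.1) : mx φ A ≤ mx φ B := by
  obtain ⟨x, hx, h1⟩ := exists_mx φ A
  rw [← h1]; exact le_mx φ B (h hx)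

theorem continuous_mx (φ : C(X, ℝ)) : Continuous (mx φ : Subcontinua X → ℝ) := by
  rw [OrderTopology.continuous_iff]
  intro c
  constructor
  · have := isOpen_meet (X := X) (isOpen_Ioi.preimage φ.continuous : IsOpen (φ ⁻¹' Ioi c))
    convert this using 1
    ext A
    simp only [mem_preimage, mem_Ioi, mem_setOf_eq, lt_mx_iff]
    rfl
  · have := isOpen_sub (X := X) (isOpen_Iio.preimage φ.continuous : IsOpen (φ ⁻¹' Iio c))
    convert this using 1
    ext A
    simp only [mem_preimage, mem_Iio, mem_setOf_eq, mx_lt_iff]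
    rfl

/-- the inclusion relation is closed -/
theorem isClosed_le : IsClosed {p : Subcontinua X × Subcontinua X | p.1.1 ⊆ p.2.1} := by
  rw [← isOpen_compl_iff, isOpen_iff_forall_mem_open]
  rintro ⟨A, B⟩ h
  simp only [mem_compl_iff, mem_setOf_eq, Set.not_subset] at h
  obtain ⟨x, hxA, hxB⟩ := h
  obtain ⟨U, V, hU, hV, hxU, hBV, hUV⟩ := normal_separation (isClosed_singleton (x := x)) B.2.1
    (by simpa using hxB)
  refine ⟨{A : Subcontinua X | (A.1 ∩ U).Nonempty} ×ˢ {B : Subcontinua X | B.1 ⊆ V}, ?_, (isOpen_meet hU).prod (isOpen_sub hV),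
    ⟨⟨x, hxA, hxU rfl⟩, hBV⟩⟩
  rintro ⟨A', B'⟩ ⟨⟨y, hy, hyU⟩, hB⟩ hs
  exact Set.disjoint_left.1 hUV hyU (hB (hs hy))

theorem isClosed_mem : IsClosed {p : X × Subcontinua X | p.1 ∈ p.2.1} := by
  rw [← isOpen_compl_iff, isOpen_iff_forall_mem_open]
  rintro ⟨x, B⟩ hxB
  obtain ⟨U, V, hU, hV, hxU, hBV, hUV⟩ := normal_separation (isClosed_singleton (x := x)) B.2.1
    (by simpa using hxB)
  refine ⟨U ×ˢ {B : Subcontinua X | B.1 ⊆ V}, ?_, hU.prod (isOpen_sub hV), ⟨hxU rfl, hBV⟩⟩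
  rintro ⟨y, B'⟩ ⟨hyU, hB⟩ hs
  exact Set.disjoint_left.1 hUV hyU (hB hs)

/-- singletons -/
def sing (x : X) : Subcontinua X := ⟨{x}, isClosed_singleton, isConnected_singleton⟩

theorem continuous_sing : Continuous (sing : X → Subcontinua X) := by
  rw [continuous_generateFrom_iff]
  rintro s (⟨U, hU, rfl⟩ | ⟨U, hU, rfl⟩)
  · convert hU using 1
    ext x; simp [sing]
  · convert hU using 1
    ext x; simp [sing]

/-- the whole space as a subcontinuum -/
def top [ConnectedSpace X] : Subcontinua X := ⟨univ, isClosed_univ, isConnected_univ⟩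

theorem le_top [ConnectedSpace X] (A : Subcontinua X) : A.1 ⊆ (top : Subcontinua X).1 :=
  Set.subset_univ _

/-- union of a connected family -/
theorem isClosed_sUnion {K : Set (Subcontinua X)} (hK : IsClosed K) :
    IsClosed (⋃ A ∈ K, A.1) := by
  have h : IsCompact {p : X × Subcontinua X | p.1 ∈ p.2.1 ∧ p.2 ∈ K} :=
    (isClosed_mem.inter (hK.preimage continuous_snd)).isCompact
  have h2 := (h.image continuous_fst).isClosed
  convert h2 using 1
  ext x
  simp [and_comm]

theorem isPreconnected_sUnion {K : Set (Subcontinua X)} (hK : IsPreconnected K) :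
    IsPreconnected (⋃ A ∈ K, A.1) := by
  intro U V hU hV hUV hKU hKV
  by_contra hcon
  rw [Set.not_nonempty_iff_eq_empty] at hcon
  have key : ∀ A ∈ K, A.1 ⊆ U ∨ A.1 ⊆ V := by
    intro A hA
    have hAK : A.1 ⊆ ⋃ A ∈ K, A.1 := Set.subset_biUnion_of_mem (u := fun A => A.1) hA
    by_contra h
    rw [not_or, Set.not_subset, Set.not_subset] at h
    obtain ⟨⟨x, hx, hxU⟩, ⟨y, hy, hyV⟩⟩ := h
    have h1 := A.2.2.2 U V hU hV (hAK.trans hUV)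
      ⟨y, hy, (hUV (hAK hy)).resolve_right hyV⟩ ⟨x, hx, (hUV (hAK hx)).resolve_left hxU⟩
    obtain ⟨z, hz, hz2⟩ := h1
    have : z ∈ (⋃ A ∈ K, A.1) ∩ (U ∩ V) := ⟨hAK hz, hz2⟩
    rw [hcon] at this; exact this
  have h2 := hK {A | A.1 ⊆ U} {A | A.1 ⊆ V} (isOpen_sub hU) (isOpen_sub hV) (fun A hA => key A hA)
  obtain ⟨x, hx, hxU⟩ := hKU
  obtain ⟨y, hy, hyV⟩ := hKV
  simp only [mem_iUnion, exists_prop] at hx hy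
  obtain ⟨A, hA, hxA⟩ := hx
  obtain ⟨B, hB, hyB⟩ := hy
  have no : ∀ C ∈ K, ∀ z ∈ C.1, z ∈ U → z ∈ V → False := by
    intro C hC z hz h1 h2
    have : z ∈ (⋃ A ∈ K, A.1) ∩ (U ∩ V) := ⟨Set.mem_biUnion hC hz, h1, h2⟩
    rw [hcon] at this; exact this
  have hAU : A.1 ⊆ U := (key A hA).resolve_right (fun h => no A hA x hxA hxU (h hxA))
  have hBV : B.1 ⊆ V := (key B hB).resolve_left (fun h => no B hB y hyB (h hyB) hyV)
  obtain ⟨C, hC, hCU, hCV⟩ := h2 ⟨A, hA, hAU⟩ ⟨B, hB, hBV⟩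
  obtain ⟨z, hz⟩ := C.2.2.1
  exact no C hC z hz (hCU hz) (hCV hz)

/-- the union of a closed connected family -/
def bigU (K : Set (Subcontinua X)) (hK : IsClosed K) (hc : IsConnected K) : Subcontinua X :=
  ⟨⋃ A ∈ K, A.1, isClosed_sUnion hK, by
    obtain ⟨A, hA⟩ := hc.1
    obtain ⟨x, hx⟩ := A.2.2.1
    exact ⟨x, Set.mem_biUnion hA hx⟩, isPreconnected_sUnion hc.2⟩

end basic
end HS

namespace HS

theorem pi_uniformity {ι : Type*} {n : Set ((ι → ℝ) × (ι → ℝ))} (hn : n ∈ uniformity (ι → ℝ)) :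
    ∃ S : Finset ι, ∃ ε > 0, ∀ x y : ι → ℝ, (∀ i ∈ S, |y i - x i| < ε) → (x, y) ∈ n := by
  rw [Pi.uniformity] at hn
  have hb := Filter.HasBasis.iInf' (fun i : ι => (Metric.uniformity_basis_dist (α := ℝ)).comap
    (fun a : (ι → ℝ) × (ι → ℝ) => (a.1 i, a.2 i)))
  obtain ⟨⟨I, f⟩, ⟨hI, hf⟩, hsub⟩ := hb.mem_iff.1 hn
  classical
  obtain ⟨ε, hε, hεf⟩ : ∃ ε > 0, ∀ i ∈ hI.toFinset, ε ≤ f i := by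
    have : ∀ S : Finset ι, (∀ i ∈ S, 0 < f i) → ∃ ε > 0, ∀ i ∈ S, ε ≤ f i := by
      intro S
      induction S using Finset.induction_on with
      | empty => intro _; exact ⟨1, one_pos, by simp⟩
      | insert a s ha ih =>
        intro h
        obtain ⟨ε, h0, h1⟩ := ih (fun i hi => h i (Finset.mem_insert_of_mem hi))
        refine ⟨min ε (f a), lt_min h0 (h a (Finset.mem_insert_self _ _)), ?_⟩
        intro i hi
        rcases Finset.mem_insert.1 hi with rfl | hi
        · exact min_le_right _ _
        · exact (min_le_left _ _).trans (h1 i hi)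
    exact this _ (fun i hi => hf i (by simpa using hi))
  refine ⟨hI.toFinset, ε, hε, fun x y h => hsub ?_⟩
  simp only [mem_iInter]
  intro i hi
  have h1 := (h i (by simpa using hi)).trans_le (hεf i (by simpa using hi))
  simp only [mem_preimage, mem_setOf_eq, Real.dist_eq]
  rw [abs_sub_comm]; exact h1

theorem min_pos_finset {ι : Type*} (S : Finset ι) (f : ι → ℝ) (hf : ∀ i ∈ S, 0 < f i) :
    ∃ ε > 0, ∀ i ∈ S, ε ≤ f i := by
  classical
  induction S using Finset.induction_on with
  | empty => exact ⟨1, one_pos, by simp⟩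
  | insert a s ha ih =>
    obtain ⟨ε, h0, h1⟩ := ih (fun i hi => hf i (Finset.mem_insert_of_mem hi))
    refine ⟨min ε (f a), lt_min h0 (hf a (Finset.mem_insert_self _ _)), ?_⟩
    intro i hi
    rcases Finset.mem_insert.1 hi with rfl | hi
    · exact min_le_right _ _
    · exact (min_le_left _ _).trans (h1 i hi)

section basic
variable {X : Type u} [TopologicalSpace X] [CompactSpace X] [T2Space X]

theorem exists_mx_ne {A B : Subcontinua X} (h : ∀ φ : C(X, ℝ), mx φ A = mx φ B) :
    A.1 ⊆ B.1 := by
  intro x hx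
  by_contra hxB
  obtain ⟨f, hf0, hf1, -⟩ := exists_continuous_zero_one_of_isClosed B.2.1
    (isClosed_singleton (x := x)) (by simpa using hxB)
  have h1 : mx f A < 1 := by
    rw [h f, mx_lt_iff]
    intro y hy
    rw [hf0 hy]; simp
  have := (le_mx f A hx).trans_lt h1
  rw [hf1 rfl] at this
  simp at this

theorem isEmbedding_mx :
    Topology.IsEmbedding (fun (A : Subcontinua X) (φ : C(X, ℝ)) => mx φ A) := by
  apply Topology.IsClosedEmbedding.isEmbedding
  apply Continuous.isClosedEmbedding
  · exact continuous_pi fun φ => continuous_mx φ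
  · intro A B h
    apply Subtype.ext
    exact Set.Subset.antisymm (exists_mx_ne fun φ => congrFun h φ)
      (exists_mx_ne fun φ => (congrFun h φ).symm)

/-- Lebesgue numbers -/
theorem leb (U : Set (Set (Subcontinua X))) (hU : IsOpenCover U) :
    ∃ S : Finset C(X, ℝ), ∃ ε > 0, ∀ A : Subcontinua X, ∃ u ∈ U, ∀ A' : Subcontinua X,
      (∀ ξ ∈ S, |mx ξ A' - mx ξ A| < ε) → A' ∈ u := by
  let Θ := fun (A : Subcontinua X) (φ : C(X, ℝ)) => mx φ A
  have hΘ : Topology.IsEmbedding Θ := isEmbedding_mx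
  have h1 : ∀ u : U, ∃ c : Set (C(X, ℝ) → ℝ), IsOpen c ∧ Θ ⁻¹' c = u.1 := by
    intro u
    exact hΘ.isOpen_iff.1 (hU.1 u.1 u.2)
  choose c hc hcu using h1
  have hcomp : IsCompact (Set.range Θ) := isCompact_range hΘ.continuous
  have hcov : Set.range Θ ⊆ ⋃ u, c u := by
    rintro _ ⟨A, rfl⟩
    have : A ∈ ⋃₀ U := by rw [hU.2]; trivial
    obtain ⟨u, hu, hA⟩ := this
    rw [mem_iUnion]
    refine ⟨⟨u, hu⟩, ?_⟩
    have : A ∈ Θ ⁻¹' c ⟨u, hu⟩ := by rw [hcu]; exact hA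
    exact this
  obtain ⟨n, hn, hn2⟩ := lebesgue_number_lemma hcomp hc hcov
  obtain ⟨S, ε, hε, hS⟩ := pi_uniformity hn
  refine ⟨S, ε, hε, fun A => ?_⟩
  obtain ⟨u, hu⟩ := hn2 (Θ A) ⟨A, rfl⟩
  refine ⟨u.1, u.2, fun A' hA' => ?_⟩
  rw [← hcu]
  exact hu (hS _ _ hA')

/-- Continuity through a closed relation with compact fibre space -/
theorem continuousOn_of_rel {α K Y : Type*} [TopologicalSpace α] [TopologicalSpace K]
    [CompactSpace K] [TopologicalSpace Y] {R : Set (α × K)} (hR : IsClosed R) {g : K → Y}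
    (hg : Continuous g) {D : Set α} {f : α → Y} (h1 : ∀ x ∈ D, ∃ k, (x, k) ∈ R)
    (h2 : ∀ x ∈ D, ∀ k, (x, k) ∈ R → g k = f x) : ContinuousOn f D := by
  rw [continuousOn_iff']
  intro V hV
  have hc : IsClosed (R ∩ {p : α × K | g p.2 ∉ V}) :=
    hR.inter ((hV.isClosed_compl.preimage (hg.comp continuous_snd)))
  have hp := isClosedMap_fst_of_compactSpace _ hc
  refine ⟨_, hp.isOpen_compl, ?_⟩
  ext x
  constructor
  · rintro ⟨hx, hD⟩
    refine ⟨?_, hD⟩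
    rintro ⟨⟨y, k⟩, ⟨hk, hkV⟩, rfl⟩
    exact hkV (by rw [h2 _ hD _ hk]; exact hx)
  · rintro ⟨hx, hD⟩
    refine ⟨?_, hD⟩
    by_contra hV'
    obtain ⟨k, hk⟩ := h1 x hD
    exact hx ⟨(x, k), ⟨hk, by rw [mem_setOf_eq, h2 x hD k hk]; exact hV'⟩, rfl⟩

/-- interval lemma -/
theorem interval_sum {J : Type*} (T : Finset J) (E : J → Set ℝ) (d : J → ℝ) {S : Set ℝ}
    (hS : IsPreconnected S) (hE : ∀ x ∈ S, ∃ j ∈ T, x ∈ E j) (hd : ∀ j ∈ T, 0 ≤ d j)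
    (hdE : ∀ j ∈ T, ∀ x ∈ E j, ∀ y ∈ E j, |x - y| ≤ d j) {x y : ℝ} (hx : x ∈ S) (hy : y ∈ S) :
    |x - y| ≤ ∑ j ∈ T, d j := by
  wlog hxy : x ≤ y generalizing x y
  · rw [abs_sub_comm]; exact this hy hx (le_of_not_ge hxy)
  rw [abs_sub_comm, abs_of_nonneg (sub_nonneg.2 hxy)]
  have h1 : Icc x y ⊆ S := hS.ordConnected.out hx hy
  have h2 : Icc x y ⊆ ⋃ j ∈ T, E j := by
    intro z hz
    obtain ⟨j, hj, h⟩ := hE z (h1 hz)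
    simp only [mem_iUnion]
    exact ⟨j, hj, h⟩
  have h3 : MeasureTheory.volume (Icc x y) ≤ ∑ j ∈ T, ENNReal.ofReal (d j) := by
    refine (MeasureTheory.measure_mono h2).trans ((MeasureTheory.measure_biUnion_finset_le _ _).trans ?_)
    apply Finset.sum_le_sum
    intro j hj
    refine (Real.volume_le_diam _).trans ?_
    apply Metric.ediam_le
    intro a ha b hb
    rw [edist_dist]
    exact ENNReal.ofReal_le_ofReal (hdE j hj a ha b hb)
  rw [Real.volume_Icc, ← ENNReal.ofReal_sum_of_nonneg hd] at h3
  exact (ENNReal.ofReal_le_ofReal_iff (Finset.sum_nonneg hd)).1 h3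

/-- boundary bumping -/
theorem bump {A B : Subcontinua X} (hAB : A.1 ⊆ B.1) (hne : ¬ B.1 ⊆ A.1) :
    ∃ C : Subcontinua X, A.1 ⊆ C.1 ∧ C.1 ⊆ B.1 ∧ ¬ C.1 ⊆ A.1 ∧ ¬ B.1 ⊆ C.1 := by
  rw [Set.not_subset] at hne
  obtain ⟨x, hxB, hxA⟩ := hne
  obtain ⟨G, H, hG, hH, hAG, hxH, hGH⟩ := normal_separation A.2.1 (isClosed_singleton (x := x))
    (by simpa using hxA)
  have hxG : x ∉ closure G := by
    have := hGH.closure_left hH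
    exact fun h => Set.disjoint_left.1 this h (hxH rfl)
  let Y : Set X := B.1 ∩ closure G
  have hYc : IsClosed Y := B.2.1.inter isClosed_closure
  obtain ⟨a, ha⟩ := A.2.2.1
  have hAY : A.1 ⊆ Y := fun z hz => ⟨hAB hz, subset_closure (hAG hz)⟩
  have haY : a ∈ Y := hAY ha
  let C : Set X := connectedComponentIn Y a
  have hCY : C ⊆ Y := connectedComponentIn_subset _ _
  have hCc : IsClosed C := by
    have : C = (↑) '' connectedComponent (⟨a, haY⟩ : Y) := connectedComponentIn_eq_image haY
    rw [this]
    exact hYc.isClosedEmbedding_subtypeVal.isClosedMap _ isClosed_connectedComponent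
  have hCconn : IsConnected C := isConnected_connectedComponentIn_iff.2 haY
  have hAC : A.1 ⊆ C := A.2.2.2.subset_connectedComponentIn ha hAY
  refine ⟨⟨C, hCc, hCconn⟩, hAC, fun z hz => (hCY hz).1, ?_, fun h => hxG (hCY (h hxB)).2⟩
  intro hCA
  have hCA : C ⊆ A.1 := hCA
  have : CompactSpace Y := isCompact_iff_compactSpace.1 hYc.isCompact
  -- a clopen set of Y between
  have h1 : ⋂ s : { s : Set Y // IsClopen s ∧ (⟨a, haY⟩ : Y) ∈ s }, s.1 ⊆ ((↑) ⁻¹' G : Set Y) := by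
    rw [← connectedComponent_eq_iInter_isClopen]
    intro z hz
    have : (z : X) ∈ C := by
      have : C = (↑) '' connectedComponent (⟨a, haY⟩ : Y) := connectedComponentIn_eq_image haY
      rw [this]; exact ⟨z, hz, rfl⟩
    exact hAG (hCA this)
  have : Nonempty { s : Set Y // IsClopen s ∧ (⟨a, haY⟩ : Y) ∈ s } := ⟨⟨univ, isClopen_univ, trivial⟩⟩
  obtain ⟨⟨Z, hZ, haZ⟩, hZG⟩ := exists_subset_nhds_of_compactSpace
    (V := fun s : { s : Set Y // IsClopen s ∧ (⟨a, haY⟩ : Y) ∈ s } => s.1)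
    (by
      intro s t
      exact ⟨⟨s.1 ∩ t.1, s.2.1.inter t.2.1, s.2.2, t.2.2⟩, inter_subset_left, inter_subset_right⟩)
    (fun s => s.2.1.1)
    (U := ((↑) ⁻¹' G : Set Y))
    (fun z hz => (hG.preimage continuous_subtype_val).mem_nhds (h1 hz))
  simp only at hZG
  -- Z is clopen in B
  obtain ⟨O, hO, hOZ⟩ := isOpen_induced_iff.1 hZ.2
  obtain ⟨F, hF, hFZ⟩ := isClosed_induced_iff.1 hZ.1
  have hcon := B.2.2.2 (O ∩ G) (F ∩ closure G)ᶜ (hO.inter hG) (hF.inter isClosed_closure).isOpen_compl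
  have e1 : ∀ z (hz : z ∈ Y), (z ∈ O ↔ z ∈ F) := by
    intro z hz
    have h2 : (⟨z, hz⟩ : Y) ∈ Z ↔ z ∈ O := by rw [← hOZ]; rfl
    have h3 : (⟨z, hz⟩ : Y) ∈ Z ↔ z ∈ F := by rw [← hFZ]; rfl
    rw [← h2, h3]
  have e2 : ∀ z (hz : z ∈ Y), z ∈ O → z ∈ G := by
    intro z hz hzO
    exact @hZG ⟨z, hz⟩ (by rw [← hOZ]; exact hzO)
  obtain ⟨z, hzB, ⟨hzO, hzG⟩, hzn⟩ := hcon
    (by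
      intro z hz
      by_cases h : z ∈ F ∩ closure G
      · left
        have hzO := (e1 z ⟨hz, h.2⟩).2 h.1
        exact ⟨hzO, e2 z ⟨hz, h.2⟩ hzO⟩
      · right; exact h)
    ⟨a, haY.1, by
      have : a ∈ O := by
        have : (⟨a, haY⟩ : Y) ∈ ((↑) ⁻¹' O : Set Y) := by rw [hOZ]; exact haZ
        exact this
      exact ⟨this, e2 a haY this⟩⟩
    ⟨x, hxB, fun h => hxG h.2⟩
  exact hzn ⟨(e1 z ⟨hzB, subset_closure hzG⟩).1 hzO, subset_closure hzG⟩

/-- monotone functions on the hyperspace -/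
def Mono (l : Subcontinua X → ℝ) : Prop := ∀ A B : Subcontinua X, A.1 ⊆ B.1 → l A ≤ l B

/-- l controls the family S -/
def Ctrl (l : Subcontinua X → ℝ) (S : Finset C(X, ℝ)) : Prop :=
  ∀ A B : Subcontinua X, A.1 ⊆ B.1 → l A = l B → ∀ ξ ∈ S, mx ξ A = mx ξ B

/-- sum of maxima -/
noncomputable def sm (S : Finset C(X, ℝ)) (A : Subcontinua X) : ℝ := ∑ ξ ∈ S, mx ξ A

theorem continuous_sm (S : Finset C(X, ℝ)) : Continuous (sm S) :=
  continuous_finsetSum _ fun ξ _ => continuous_mx ξ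

theorem mono_sm (S : Finset C(X, ℝ)) : Mono (sm S) := fun _ _ h =>
  Finset.sum_le_sum fun ξ _ => mx_mono ξ h

theorem ctrl_sm (S : Finset C(X, ℝ)) : Ctrl (sm S) S := by
  intro A B h he
  exact (Finset.sum_eq_sum_iff_of_le fun ξ _ => mx_mono ξ h).1 he

theorem Mono.add {f g : Subcontinua X → ℝ} (hf : Mono f) (hg : Mono g) :
    Mono (fun A => f A + g A) := fun A B h => add_le_add (hf A B h) (hg A B h)

theorem Mono.smul {f : Subcontinua X → ℝ} (hf : Mono f) {c : ℝ} (hc : 0 ≤ c) :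
    Mono (fun A => c * f A) := fun A B h => mul_le_mul_of_nonneg_left (hf A B h) hc

theorem ctrl_add {f : Subcontinua X → ℝ} (hf : Mono f) (S : Finset C(X, ℝ)) {c : ℝ} (hc : 0 < c) :
    Ctrl (fun A => f A + c * sm S A) S := by
  intro A B h he
  have h1 := hf A B h
  have h2 := mono_sm S A B h
  apply ctrl_sm S A B h
  simp only at he
  nlinarith

theorem Ctrl.add_right {f g : Subcontinua X → ℝ} {S : Finset C(X, ℝ)} (hf : Mono f)
    (hfS : Ctrl f S) (hg : Mono g) : Ctrl (fun A => f A + g A) S := by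
  intro A B h he
  have h1 := hf A B h
  have h2 := hg A B h
  apply hfS A B h
  simp only at he
  linarith

theorem Ctrl.eq_of_meet (hhi : HereditarilyIndecomposable X) {l : Subcontinua X → ℝ}
    {S : Finset C(X, ℝ)} (hl : Ctrl l S) {A B : Subcontinua X} {x : X} (hxA : x ∈ A.1)
    (hxB : x ∈ B.1) (he : l A = l B) : ∀ ξ ∈ S, mx ξ A = mx ξ B := by
  rcases hhi A.1 B.1 A.2.1 A.2.2 B.2.1 B.2.2 with h | h | h
  · exact hl A B h he
  · exact fun ξ hξ => (hl B A h he.symm ξ hξ).symm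
  · exact absurd (show x ∈ A.1 ∩ B.1 from ⟨hxA, hxB⟩) (by rw [h]; simp)

theorem comparable (hhi : HereditarilyIndecomposable X) {A B : Subcontinua X} {x : X}
    (hxA : x ∈ A.1) (hxB : x ∈ B.1) : A.1 ⊆ B.1 ∨ B.1 ⊆ A.1 := by
  rcases hhi A.1 B.1 A.2.1 A.2.2 B.2.1 B.2.2 with h | h | h
  · exact Or.inl h
  · exact Or.inr h
  · exact absurd (show x ∈ A.1 ∩ B.1 from ⟨hxA, hxB⟩) (by rw [h]; simp)

theorem isClosed_ge (A : Subcontinua X) : IsClosed {B : Subcontinua X | A.1 ⊆ B.1} :=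
  isClosed_le.preimage (Continuous.prodMk_right A)

theorem isClosed_leq (A : Subcontinua X) : IsClosed {B : Subcontinua X | B.1 ⊆ A.1} :=
  isClosed_le.preimage (Continuous.prodMk_left A)

theorem exists_level [ConnectedSpace X] (hhi : HereditarilyIndecomposable X)
    {l : Subcontinua X → ℝ} (hl : Continuous l) (hm : Mono l) {A : Subcontinua X} {s : ℝ}
    (h1 : l A ≤ s) (h2 : s ≤ l top) : ∃ B : Subcontinua X, A.1 ⊆ B.1 ∧ l B = s := by
  obtain ⟨a, ha⟩ := A.2.2.1
  -- maximal element of the lower set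
  obtain ⟨B1, ⟨hAB1, hB1s⟩, hB1⟩ : ∃ B1 : Subcontinua X, (A.1 ⊆ B1.1 ∧ l B1 ≤ s) ∧
      ∀ B : Subcontinua X, A.1 ⊆ B.1 → l B ≤ s → B.1 ⊆ B1.1 := by
    let I := {B : Subcontinua X // A.1 ⊆ B.1 ∧ l B ≤ s}
    have : Nonempty I := ⟨⟨A, subset_rfl, h1⟩⟩
    have hcl : ∀ i : I, IsClosed {B : Subcontinua X | i.1.1 ⊆ B.1 ∧ l B ≤ s} := fun i =>
      (isClosed_ge i.1).inter (_root_.isClosed_le hl continuous_const)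
    obtain ⟨B1, hB1⟩ := IsCompact.nonempty_iInter_of_directed_nonempty_isCompact_isClosed
      (fun i : I => {B : Subcontinua X | i.1.1 ⊆ B.1 ∧ l B ≤ s})
      (by
        intro i j
        rcases comparable hhi (i.2.1 ha) (j.2.1 ha) with h | h
        · exact ⟨j, fun B hB => ⟨h.trans hB.1, hB.2⟩, subset_rfl⟩
        · exact ⟨i, subset_rfl, fun B hB => ⟨h.trans hB.1, hB.2⟩⟩)
      (fun i => ⟨i.1, subset_rfl, i.2.2⟩) (fun i => (hcl i).isCompact) hcl
    rw [mem_iInter] at hB1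
    exact ⟨B1, hB1 ⟨A, subset_rfl, h1⟩, fun B hB hBs => (hB1 ⟨B, hB, hBs⟩).1⟩
  obtain ⟨B2, ⟨hAB2, hB2s⟩, hB2⟩ : ∃ B2 : Subcontinua X, (A.1 ⊆ B2.1 ∧ s ≤ l B2) ∧
      ∀ B : Subcontinua X, A.1 ⊆ B.1 → s ≤ l B → B2.1 ⊆ B.1 := by
    let I := {B : Subcontinua X // A.1 ⊆ B.1 ∧ s ≤ l B}
    have : Nonempty I := ⟨⟨top, le_top A, h2⟩⟩
    have hcl : ∀ i : I, IsClosed {B : Subcontinua X | B.1 ⊆ i.1.1 ∧ A.1 ⊆ B.1 ∧ s ≤ l B} := fun i =>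
      (isClosed_leq i.1).inter ((isClosed_ge A).inter (_root_.isClosed_le continuous_const hl))
    obtain ⟨B1, hB1⟩ := IsCompact.nonempty_iInter_of_directed_nonempty_isCompact_isClosed
      (fun i : I => {B : Subcontinua X | B.1 ⊆ i.1.1 ∧ A.1 ⊆ B.1 ∧ s ≤ l B})
      (by
        intro i j
        rcases comparable hhi (i.2.1 ha) (j.2.1 ha) with h | h
        · exact ⟨i, subset_rfl, fun B hB => ⟨hB.1.trans h, hB.2⟩⟩
        · exact ⟨j, fun B hB => ⟨hB.1.trans h, hB.2⟩, subset_rfl⟩)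
      (fun i => ⟨i.1, subset_rfl, i.2⟩) (fun i => (hcl i).isCompact) hcl
    rw [mem_iInter] at hB1
    exact ⟨B1, (hB1 ⟨top, le_top A, h2⟩).2, fun B hB hBs => (hB1 ⟨B, hB, hBs⟩).1⟩
  by_cases hle : B2.1 ⊆ B1.1
  · exact ⟨B1, hAB1, le_antisymm hB1s (hB2s.trans (hm _ _ hle))⟩
  · have h12 : B1.1 ⊆ B2.1 := (comparable hhi (hAB1 ha) (hAB2 ha)).resolve_right hle
    obtain ⟨C, hC1, hC2, hC3, hC4⟩ := bump h12 hle
    have hAC := hAB1.trans hC1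
    rcases le_total (l C) s with h | h
    · exact absurd (hB1 C hAC h) hC3
    · exact absurd (hB2 C hAC h) hC4

end basic
end HS

namespace HS

section lems
variable {X : Type u} [TopologicalSpace X] [CompactSpace X] [T2Space X]

theorem exists_small {f : Subcontinua X → ℝ} (hf : Continuous f) {r : ℝ} (hr : 0 < r) :
    ∃ c > 0, ∀ A, |c * f A| ≤ r := by
  obtain ⟨M, hM⟩ := (isCompact_univ (X := Subcontinua X)).exists_bound_of_continuousOn hf.continuousOn
  refine ⟨r / (|M| + 1), by positivity, fun A => ?_⟩
  have h1 : |f A| ≤ |M| + 1 := (hM A trivial).trans ((le_abs_self M).trans (by linarith))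
  rw [abs_mul, abs_of_pos (by positivity : 0 < r / (|M| + 1)), div_mul_eq_mul_div,
    div_le_iff₀ (by positivity)]
  exact mul_le_mul_of_nonneg_left h1 hr.le

theorem lemW (hhi : HereditarilyIndecomposable X) (S : Finset C(X, ℝ)) {l : Subcontinua X → ℝ}
    (hl : Continuous l) (hS : Ctrl l S) {d : ℝ} (hd : 0 < d) :
    ∃ (W : Set (Set X)) (τ : ℝ), IsOpenCover W ∧ 0 < τ ∧ ∀ w ∈ W, ∀ A A' : Subcontinua X,
      (A.1 ∩ closure w).Nonempty → (A'.1 ∩ closure w).Nonempty → |l A - l A'| ≤ τ →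
      ∀ ψ ∈ S, |mx ψ A - mx ψ A'| < d := by
  have hloc : ∀ x : X, ∃ (w : Set X) (τ : ℝ), IsOpen w ∧ x ∈ w ∧ 0 < τ ∧
      ∀ A A' : Subcontinua X,
      (A.1 ∩ closure w).Nonempty → (A'.1 ∩ closure w).Nonempty → |l A - l A'| ≤ τ →
      ∀ ψ ∈ S, |mx ψ A - mx ψ A'| < d := by
    intro x
    let Z : Set ((X × X) × (Subcontinua X × Subcontinua X)) :=
      ⋃ ψ ∈ S, {p | p.1.1 ∈ p.2.1.1 ∧ p.1.2 ∈ p.2.2.1 ∧ d ≤ |mx ψ p.2.1 - mx ψ p.2.2|}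
    have hZ : IsClosed Z := by
      apply Set.Finite.isClosed_biUnion S.finite_toSet
      intro ψ _
      have c1 : IsClosed {p : (X × X) × (Subcontinua X × Subcontinua X) | p.1.1 ∈ p.2.1.1} :=
        isClosed_mem.preimage (f := fun p : (X × X) × (Subcontinua X × Subcontinua X) =>
          (p.1.1, p.2.1)) (by fun_prop)
      have c2 : IsClosed {p : (X × X) × (Subcontinua X × Subcontinua X) | p.1.2 ∈ p.2.2.1} :=
        isClosed_mem.preimage (f := fun p : (X × X) × (Subcontinua X × Subcontinua X) =>
          (p.1.2, p.2.2)) (by fun_prop)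
      have c3 : IsClosed {p : (X × X) × (Subcontinua X × Subcontinua X) |
          d ≤ |mx ψ p.2.1 - mx ψ p.2.2|} := by
        have := continuous_mx (X := X) ψ
        exact _root_.isClosed_le continuous_const (by fun_prop)
      exact c1.inter (c2.inter c3)
    let F : (X × X) × (Subcontinua X × Subcontinua X) → (X × X) × ℝ :=
      fun p => (p.1, |l p.2.1 - l p.2.2|)
    have hF : Continuous F := by fun_prop
    have hI : IsClosed (F '' Z) := (hZ.isCompact.image hF).isClosed
    have hx : ((x, x), (0 : ℝ)) ∈ (F '' Z)ᶜ := by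
      rintro ⟨⟨⟨y, y'⟩, ⟨A, A'⟩⟩, hp, he⟩
      simp only [F, Prod.mk.injEq, abs_eq_zero] at he
      obtain ⟨⟨rfl, rfl⟩, he⟩ := he
      simp only [Z, mem_iUnion] at hp
      obtain ⟨ψ, hψ, h1, h2, h3⟩ := hp
      have := hS.eq_of_meet hhi h1 h2 (by linarith) ψ hψ
      simp only at h3
      rw [this] at h3
      simp at h3
      linarith
    have hn := hI.isOpen_compl.mem_nhds hx
    rw [nhds_prod_eq, nhds_prod_eq, Filter.mem_prod_iff] at hn
    obtain ⟨V, hV, V', hV', hsub⟩ := hn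
    obtain ⟨V1, hV1, V2, hV2, hVV⟩ := Filter.mem_prod_iff.1 hV
    obtain ⟨τ, hτ, hτV⟩ := Metric.mem_nhds_iff.1 hV'
    obtain ⟨K, hK, hKc, hKV⟩ := exists_mem_nhds_isClosed_subset (Filter.inter_mem hV1 hV2)
    have hcl : closure (interior K) ⊆ K := closure_minimal interior_subset hKc
    refine ⟨interior K, τ / 2, isOpen_interior, mem_interior_iff_mem_nhds.2 hK, by linarith, ?_⟩
    rintro A A' ⟨y, hyA, hyK⟩ ⟨y', hyA', hyK'⟩ hle ψ hψ
    by_contra hcon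
    push Not at hcon
    have h1 : ((y, y'), |l A - l A'|) ∈ (F '' Z)ᶜ := by
      apply hsub
      refine ⟨hVV ⟨(hKV (hcl hyK)).1, (hKV (hcl hyK')).2⟩, hτV ?_⟩
      rw [Metric.mem_ball, Real.dist_eq, sub_zero, abs_abs]
      linarith
    apply h1
    refine ⟨((y, y'), (A, A')), ?_, rfl⟩
    simp only [Z, mem_iUnion]
    exact ⟨ψ, hψ, hyA, hyA', hcon⟩
  choose w τ hw hxw hτ hprop using hloc
  obtain ⟨t, -, ht⟩ := (isCompact_univ (X := X)).elim_nhds_subcover w (fun x _ => (hw x).mem_nhds (hxw x))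
  obtain ⟨ε, hε, hετ⟩ := min_pos_finset t τ (fun i _ => hτ i)
  refine ⟨w '' (t : Set X), ε, ⟨?_, ?_⟩, hε, ?_⟩
  · rintro _ ⟨x, _, rfl⟩; exact hw x
  · rw [Set.sUnion_image]
    exact Set.univ_subset_iff.1 ht
  · rintro _ ⟨x, hx, rfl⟩ A A' h1 h2 h3
    exact hprop x A A' h1 h2 (h3.trans (hετ x hx))

theorem lemB (hC : IsCSpace (Subcontinua X)) (𝓦 : ℕ → Set (Set X)) (h𝓦 : ∀ i, IsOpenCover (𝓦 i)) :
    ∃ (T : Finset (Subcontinua X)) (j : Subcontinua X → ℕ) (W : Subcontinua X → Set X)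
      (O C : Subcontinua X → Set (Subcontinua X)) (S : Finset C(X, ℝ)),
      (∀ l, W l ∈ 𝓦 (j l)) ∧ (∀ l, IsOpen (O l)) ∧ (∀ l, IsClosed (C l)) ∧ (∀ l, O l ⊆ C l) ∧
      (∀ B, ∃ l ∈ T, B ∈ O l) ∧ (∀ l, ∀ B ∈ C l, (B.1 ∩ W l).Nonempty) ∧
      (∀ l l' B, B ∈ C l → B ∈ C l' → j l = j l' → W l = W l') ∧
      (∀ B B' : Subcontinua X, (∀ ξ ∈ S, mx ξ B = mx ξ B') → ∀ l,
        (B ∈ O l → B' ∈ O l) ∧ (B ∈ C l → B' ∈ C l)) := by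
  obtain ⟨V, hV, hVu⟩ := hC (fun i => (fun W : Set X => {B : Subcontinua X | (B.1 ∩ W).Nonempty}) '' 𝓦 i) (by
    intro i
    refine ⟨?_, ?_⟩
    · rintro _ ⟨W, hW, rfl⟩
      exact isOpen_meet ((h𝓦 i).1 W hW)
    · rw [Set.eq_univ_iff_forall]
      intro B
      obtain ⟨x, hx⟩ := B.2.2.1
      have : x ∈ ⋃₀ 𝓦 i := by rw [(h𝓦 i).2]; trivial
      obtain ⟨W, hW, hxW⟩ := this
      exact ⟨_, ⟨W, hW, rfl⟩, ⟨x, hx, hxW⟩⟩)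
  have hcov : IsOpenCover (⋃ i, V i) := by
    refine ⟨?_, ?_⟩
    · intro s hs
      obtain ⟨i, hi⟩ := mem_iUnion.1 hs
      exact (hV i).1 s hi
    · rw [Set.sUnion_iUnion]; exact hVu
  obtain ⟨S, ε, hε, hS⟩ := leb _ hcov
  choose u huV hu using hS
  have hj : ∀ A, ∃ i, u A ∈ V i := fun A => mem_iUnion.1 (huV A)
  choose j hj using hj
  have hw : ∀ i v, ∃ W : Set X, v ∈ V i → W ∈ 𝓦 i ∧ ∀ B ∈ v, (B.1 ∩ W).Nonempty := by
    intro i v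
    by_cases hv : v ∈ V i
    · obtain ⟨_, ⟨W, hW, rfl⟩, hvW⟩ := (hV i).2.2 v hv
      exact ⟨W, fun _ => ⟨hW, fun B hB => hvW hB⟩⟩
    · exact ⟨∅, fun h => absurd h hv⟩
  choose w hw using hw
  let O : Subcontinua X → Set (Subcontinua X) := fun l => {B | ∀ ξ ∈ S, |mx ξ B - mx ξ l| < ε / 2}
  let C : Subcontinua X → Set (Subcontinua X) := fun l => {B | ∀ ξ ∈ S, |mx ξ B - mx ξ l| ≤ ε / 2}
  have hOo : ∀ l, IsOpen (O l) := by
    intro l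
    have : O l = ⋂ ξ ∈ S, {B | |mx ξ B - mx ξ l| < ε / 2} := by ext; simp [O]
    rw [this]
    apply isOpen_biInter_finset
    intro ξ _
    have := continuous_mx (X := X) ξ
    exact isOpen_lt (by fun_prop) continuous_const
  have hCc : ∀ l, IsClosed (C l) := by
    intro l
    have : C l = ⋂ ξ ∈ S, {B | |mx ξ B - mx ξ l| ≤ ε / 2} := by ext; simp [C]
    rw [this]
    apply isClosed_biInter
    intro ξ _
    have := continuous_mx (X := X) ξ
    exact _root_.isClosed_le (by fun_prop) continuous_const
  have hCu : ∀ l, C l ⊆ u l := fun l B hB => hu l B (fun ξ hξ => (hB ξ hξ).trans_lt (by linarith))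
  obtain ⟨T, -, hT⟩ := (isCompact_univ (X := Subcontinua X)).elim_nhds_subcover O
    (fun l _ => (hOo l).mem_nhds (fun ξ _ => by simp [hε]))
  refine ⟨T, j, fun l => w (j l) (u l), O, C, S, ?_, hOo, hCc, ?_, ?_, ?_, ?_, ?_⟩
  · intro l; exact (hw _ _ (hj l)).1
  · intro l B hB ξ hξ; exact (hB ξ hξ).le
  · intro B
    have := hT (mem_univ B)
    simpa using this
  · intro l B hB
    exact (hw _ _ (hj l)).2 B (hCu l hB)
  · intro l l' B h1 h2 he
    have : u l = u l' := by
      by_contra hne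
      have := (hV (j l)).2.1 (hj l) (he ▸ hj l') hne
      exact Set.disjoint_left.1 this (hCu l h1) (hCu l' h2)
    simp only [he, this]
  · intro B B' h l
    constructor
    · intro hB ξ hξ
      rw [← h ξ hξ]; exact hB ξ hξ
    · intro hB ξ hξ
      rw [← h ξ hξ]; exact hB ξ hξ

end lems
end HS

namespace HS

section lems
variable {X : Type u} [TopologicalSpace X] [CompactSpace X] [T2Space X] [ConnectedSpace X]

theorem mx_sub_le_sm {S : Finset C(X, ℝ)} {φ : C(X, ℝ)} (hφ : φ ∈ S) {A B : Subcontinua X}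
    (h : A.1 ⊆ B.1) : mx φ B - mx φ A ≤ sm S B - sm S A := by
  unfold sm
  rw [← Finset.sum_sub_distrib]
  exact Finset.single_le_sum (f := fun ξ => mx ξ B - mx ξ A)
    (fun ξ _ => sub_nonneg.2 (mx_mono ξ h)) hφ

theorem sub_bigU (hhi : HereditarilyIndecomposable X) {K : Set (Subcontinua X)} (hK : IsClosed K)
    (hc : IsConnected K) {A0 A1 B0 : Subcontinua X} (h0 : A0 ∈ K) (h1 : A1 ∈ K)
    (h0B : A0.1 ⊆ B0.1) (h1B : ¬ A1.1 ⊆ B0.1) {x : X} (hx : x ∈ B0.1) : ∃ A ∈ K, x ∈ A.1 := by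
  obtain ⟨a, ha⟩ := A0.2.2.1
  have haU : a ∈ (bigU K hK hc).1 := Set.mem_biUnion h0 ha
  rcases comparable hhi (h0B ha) haU with h | h
  · have := h hx
    simpa [bigU] using this
  · exact absurd ((Set.subset_biUnion_of_mem (u := fun A : Subcontinua X => A.1) h1).trans h) h1B

theorem isClosed_proj {Z : Set (Subcontinua X × Subcontinua X)} (hZ : IsClosed Z) :
    IsClosed {A | ∃ B, (A, B) ∈ Z} := by
  convert isClosedMap_fst_of_compactSpace _ hZ using 1
  ext A; simp

/-- coarse bound from a common superset -/
theorem coarse {S : Finset C(X, ℝ)} {φ : C(X, ℝ)} (hφ : φ ∈ S) {l : Subcontinua X → ℝ}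
    (hD : Mono (fun A => l A - sm S A)) {A A' B : Subcontinua X} (hA : A.1 ⊆ B.1)
    (hA' : A'.1 ⊆ B.1) {a s : ℝ} (ha : a ≤ l A) (ha' : a ≤ l A') (hs : l B ≤ s) :
    |mx φ A - mx φ A'| ≤ s - a := by
  have h1 := mx_sub_le_sm hφ hA
  have h2 := mx_sub_le_sm hφ hA'
  have h3 := hD _ _ hA
  have h4 := hD _ _ hA'
  have h5 := mx_mono φ hA
  have h6 := mx_mono φ hA'
  simp only at h3 h4
  rw [abs_le]
  constructor <;> linarith

theorem lemA (hhi : HereditarilyIndecomposable X) (hC : IsCSpace (Subcontinua X))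
    (Φ Ψ : Finset C(X, ℝ)) {θ δ : ℝ} (hθ : 0 < θ) (hδ : 0 < δ) :
    ∃ l : Subcontinua X → ℝ, Continuous l ∧ (∀ A, |l A - sm Φ A| ≤ θ / 8) ∧
      ∀ a b : ℝ, ∃ P Q : Set (Subcontinua X), IsClosed P ∧ IsClosed Q ∧
        (∀ A, a ≤ l A → l A ≤ b → A ∈ P ∨ A ∈ Q) ∧
        (∀ A ∈ P, a ≤ l A ∧ l A ≤ b) ∧ (∀ A ∈ Q, a ≤ l A ∧ l A ≤ b) ∧
        (∀ K : Set (Subcontinua X), IsClosed K → IsConnected K → (K ⊆ P ∨ K ⊆ Q) →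
          ∀ A ∈ K, ∀ A' ∈ K, ∀ φ ∈ Φ, |mx φ A - mx φ A'| ≤ b + θ - a) ∧
        (∀ K : Set (Subcontinua X), ∀ t, IsClosed K → IsConnected K → K ⊆ P → (∀ A ∈ K, l A = t) →
          ∀ A ∈ K, ∀ A' ∈ K, ∀ ψ ∈ Ψ, |mx ψ A - mx ψ A'| < δ) := by
  classical
  have hne : Nonempty (Subcontinua X) := ⟨top⟩
  -- the function l1
  obtain ⟨η1, hη1, hη1b⟩ := exists_small (continuous_sm (X := X) (Φ ∪ Ψ)) (r := θ / 16) (by linarith)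
  let l1 : Subcontinua X → ℝ := fun A => sm Φ A + η1 * sm (Φ ∪ Ψ) A
  have hl1 : Continuous l1 := by
    have h1 := continuous_sm (X := X) (Φ ∪ Ψ)
    have h2 := continuous_sm (X := X) Φ
    fun_prop
  have hl1m : Mono l1 := (mono_sm Φ).add ((mono_sm _).smul hη1.le)
  have hl1c : Ctrl l1 (Φ ∪ Ψ) := ctrl_add (mono_sm Φ) _ hη1
  -- the numbers
  let δ' : ℝ := min (δ / 2) (θ / (4 * (Φ.card + 1)))
  have hδ' : 0 < δ' := lt_min (by linarith) (by positivity)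
  let d : ℕ → ℝ := fun j => δ' / 2 / 2 ^ j
  have hd : ∀ j, 0 < d j := fun j => by positivity
  have hdsum : ∀ J : Finset ℕ, ∑ j ∈ J, d j ≤ δ' := fun J =>
    sum_le_hasSum J (fun j _ => (hd j).le) (hasSum_geometric_two' δ')
  have hW := fun j => lemW hhi (Φ ∪ Ψ) hl1 hl1c (hd j)
  choose 𝓦 τs h𝓦 hτs hWp using hW
  obtain ⟨T, j, W, O, C, Ξ, hW𝓦, hO, hCc, hOC, hTO, hCW, hCC, hsat⟩ := lemB hC 𝓦 h𝓦
  obtain ⟨τ, hτ, hττ⟩ := min_pos_finset T (fun l => τs (j l)) (fun l _ => hτs _)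
  obtain ⟨η2, hη2, hη2b⟩ := exists_small (continuous_sm (X := X) Ξ) (r := min (τ / 2) (θ / 16))
    (lt_min (by linarith) (by linarith))
  let l : Subcontinua X → ℝ := fun A => l1 A + η2 * sm Ξ A
  have hl : Continuous l := by
    have h1 := continuous_sm (X := X) Ξ
    fun_prop
  have hlm : Mono l := hl1m.add ((mono_sm _).smul hη2.le)
  have hlΞ : Ctrl l Ξ := ctrl_add hl1m _ hη2
  have hlΦ : Ctrl l (Φ ∪ Ψ) := hl1c.add_right hl1m ((mono_sm _).smul hη2.le)
  have hlD : Mono (fun A => l A - sm Φ A) := by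
    intro A B h
    have h1 := mono_sm (Φ ∪ Ψ) A B h
    have h2 := mono_sm Ξ A B h
    simp only [l, l1]
    nlinarith
  have hlb : ∀ A, |l A - sm Φ A| ≤ θ / 8 := by
    intro A
    have h1 := hη1b A
    have h2 := (hη2b A).trans (min_le_right _ _)
    have : l A - sm Φ A = η1 * sm (Φ ∪ Ψ) A + η2 * sm Ξ A := by simp only [l, l1]; ring
    rw [this]
    exact (abs_add_le _ _).trans (by linarith)
  have hl1τ : ∀ A A', l A = l A' → |l1 A - l1 A'| ≤ τ := by
    intro A A' h
    have h1 := abs_le.1 ((hη2b A).trans (min_le_left _ _))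
    have h2 := abs_le.1 ((hη2b A').trans (min_le_left _ _))
    simp only [l] at h
    rw [abs_le]
    constructor <;> linarith
  refine ⟨l, hl, hlb, fun a b => ?_⟩
  have hslab : IsClosed {A | a ≤ l A ∧ l A ≤ b} :=
    (_root_.isClosed_le continuous_const hl).inter (_root_.isClosed_le hl continuous_const)
  by_cases hs : l top < b + θ
  · refine ⟨∅, {A | a ≤ l A ∧ l A ≤ b}, isClosed_empty, hslab, fun A h1 h2 => Or.inr ⟨h1, h2⟩,
      by simp, fun A h => h, ?_, ?_⟩
    · rintro K hK hKc (hP | hQ) A hA A' hA' φ hφ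
      · exact absurd (hP hA) (by simp)
      · exact coarse hφ hlD (le_top A) (le_top A') (hQ hA).1 (hQ hA').1 hs.le
    · intro K t hK hKc hP _ A hA
      exact absurd (hP hA) (by simp)
  push Not at hs
  let s := b + θ
  let P : Set (Subcontinua X) := {A | (a ≤ l A ∧ l A ≤ b) ∧ ∃ i ∈ T, ∃ B : Subcontinua X,
    A.1 ⊆ B.1 ∧ l B = s ∧ B ∈ C i ∧ (A.1 ∩ closure (W i)).Nonempty}
  let Q : Set (Subcontinua X) := {A | (a ≤ l A ∧ l A ≤ b) ∧ ∀ i ∈ T, ¬ (A.1 ∩ W i).Nonempty ∨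
    ∃ B : Subcontinua X, A.1 ⊆ B.1 ∧ l B = s ∧ B ∉ O i}
  have hWo : ∀ i, IsOpen (W i) := fun i => (h𝓦 (j i)).1 _ (hW𝓦 i)
  have hlev : IsClosed {p : Subcontinua X × Subcontinua X | l p.2 = s} :=
    isClosed_eq (hl.comp continuous_snd) continuous_const
  have hP : IsClosed P := by
    have : P = {A | a ≤ l A ∧ l A ≤ b} ∩ ⋃ i ∈ T, ({A | ∃ B, (A, B) ∈
        ({p : Subcontinua X × Subcontinua X | p.1.1 ⊆ p.2.1} ∩ ({p | l p.2 = s} ∩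
          (Prod.snd ⁻¹' C i)))} ∩ {A | (A.1 ∩ closure (W i)).Nonempty}) := by
      ext A
      simp only [P, mem_setOf_eq, mem_inter_iff, mem_iUnion, mem_preimage, exists_prop]
      constructor
      · rintro ⟨h, i, hi, B, h1, h2, h3, h4⟩
        exact ⟨h, i, hi, ⟨B, h1, h2, h3⟩, h4⟩
      · rintro ⟨h, i, hi, ⟨B, h1, h2, h3⟩, h4⟩
        exact ⟨h, i, hi, B, h1, h2, h3, h4⟩
    rw [this]
    refine hslab.inter (Set.Finite.isClosed_biUnion T.finite_toSet fun i _ => ?_)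
    exact (isClosed_proj (isClosed_le.inter (hlev.inter ((hCc i).preimage continuous_snd)))).inter
      (isClosed_meet isClosed_closure)
  have hQ : IsClosed Q := by
    have : Q = {A | a ≤ l A ∧ l A ≤ b} ∩ ⋂ i ∈ T, ({A | (A.1 ∩ W i).Nonempty}ᶜ ∪ {A | ∃ B, (A, B) ∈
        ({p : Subcontinua X × Subcontinua X | p.1.1 ⊆ p.2.1} ∩ ({p | l p.2 = s} ∩
          (Prod.snd ⁻¹' (O i)ᶜ)))}) := by
      ext A
      simp only [Q, mem_setOf_eq, mem_inter_iff, mem_iInter, mem_preimage, mem_union,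
        mem_compl_iff]
    rw [this]
    refine hslab.inter (isClosed_biInter fun i _ => ?_)
    exact (isOpen_meet (hWo i)).isClosed_compl.union
      (isClosed_proj (isClosed_le.inter (hlev.inter ((hO i).isClosed_compl.preimage continuous_snd))))
  -- the key claim
  have key : ∀ K : Set (Subcontinua X), IsClosed K → IsConnected K → (K ⊆ P ∨ K ⊆ Q) →
      ∀ A0 ∈ K, ∀ B0 : Subcontinua X, A0.1 ⊆ B0.1 → l B0 = s → ∀ A ∈ K, A.1 ⊆ B0.1 := by
    intro K hK hKc hPQ A0 hA0 B0 hAB hB0 A1 hA1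
    by_contra hcon
    have hcov : ∀ x ∈ B0.1, ∃ A ∈ K, x ∈ A.1 := fun x hx => sub_bigU hhi hK hKc hA0 hA1 hAB hcon hx
    rcases hPQ with hKP | hKQ
    · -- P case
      have hex : ∀ x ∈ B0.1, ∃ A : Subcontinua X, x ∈ A.1 ∧ l A = b ∧
          ∃ i ∈ T, B0 ∈ C i ∧ (A.1 ∩ closure (W i)).Nonempty := by
        intro x hx
        obtain ⟨A, hA, hxA⟩ := hcov x hx
        obtain ⟨⟨_, hAb⟩, i, hi, B, hB1, hB2, hB3, z, hz1, hz2⟩ := hKP hA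
        obtain ⟨A', hAA', hA'⟩ := exists_level hhi hl hlm hAb (by linarith : b ≤ l top)
        refine ⟨A', hAA' hxA, hA', i, hi, ?_, z, hAA' hz1, hz2⟩
        exact (hsat B B0 (hlΞ.eq_of_meet hhi (hB1 hxA) hx (by rw [hB2, hB0])) i).2 hB3
      choose! Ah hAh1 hAh2 il hil1 hil2 hil3 using hex
      have hosc : ∀ φ ∈ Φ, ∀ x ∈ B0.1, ∀ y ∈ B0.1, |mx φ (Ah x) - mx φ (Ah y)| ≤ δ' := by
        intro φ hφ
        have hcont : ContinuousOn (fun x => mx φ (Ah x)) B0.1 := by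
          apply continuousOn_of_rel (R := {p : X × Subcontinua X | p.1 ∈ p.2.1} ∩ {p | l p.2 = b})
            (isClosed_mem.inter (isClosed_eq (hl.comp continuous_snd) continuous_const))
            (continuous_mx φ)
          · intro x hx
            exact ⟨Ah x, hAh1 x hx, hAh2 x hx⟩
          · rintro x hx B ⟨hxB, hB⟩
            have hB : l B = b := hB
            exact hlΦ.eq_of_meet hhi hxB (hAh1 x hx) (by rw [hB, hAh2 x hx]) φ
              (Finset.mem_union_left _ hφ)
        have hpre := B0.2.2.2.image _ hcont
        intro x hx y hy
        have := interval_sum (T.image j) (fun m => {r | ∃ x ∈ B0.1, j (il x) = m ∧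
          r = mx φ (Ah x)}) d hpre
          (by
            rintro _ ⟨z, hz, rfl⟩
            exact ⟨j (il z), Finset.mem_image_of_mem _ (hil1 z hz), z, hz, rfl, rfl⟩)
          (fun j _ => (hd j).le)
          (by
            rintro m _ _ ⟨x, hx, hxm, rfl⟩ _ ⟨y, hy, hym, rfl⟩
            have hWW : W (il x) = W (il y) := hCC _ _ B0 (hil2 x hx) (hil2 y hy) (by rw [hxm, hym])
            have h1 := hWp (j (il x)) (W (il x)) (hW𝓦 _) (Ah x) (Ah y) (hil3 x hx)
              (by rw [hWW]; exact hil3 y hy)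
              ((hl1τ _ _ (by rw [hAh2 x hx, hAh2 y hy])).trans (hττ _ (hil1 x hx))) φ
              (Finset.mem_union_left _ hφ)
            rw [hxm] at h1
            exact h1.le)
          ⟨x, hx, rfl⟩ ⟨y, hy, rfl⟩
        exact this.trans (hdsum _)
      obtain ⟨x0, hx0⟩ := B0.2.2.1
      have hsum : sm Φ B0 ≤ sm Φ (Ah x0) + Φ.card * δ' := by
        unfold sm
        rw [← nsmul_eq_mul, ← Finset.sum_const, ← Finset.sum_add_distrib]
        apply Finset.sum_le_sum
        intro φ hφ
        obtain ⟨x1, hx1, he⟩ := exists_mx φ B0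
        have h1 := le_mx φ (Ah x1) (hAh1 x1 hx1)
        have h2 := (abs_le.1 (hosc φ hφ x1 hx1 x0 hx0)).2
        linarith
      have h1 : (Φ.card : ℝ) * δ' ≤ θ / 4 := by
        have : δ' ≤ θ / (4 * (Φ.card + 1)) := min_le_right _ _
        calc (Φ.card : ℝ) * δ' ≤ (Φ.card + 1) * (θ / (4 * (Φ.card + 1))) := by
              gcongr; linarith
          _ = θ / 4 := by field_simp
      have h2 := abs_le.1 (hlb B0)
      have h3 := abs_le.1 (hlb (Ah x0))
      have h4 := hAh2 x0 hx0
      simp only [s] at hB0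
      linarith
    · -- Q case
      obtain ⟨i, hi, hBi⟩ := hTO B0
      obtain ⟨x, hxB, hxW⟩ := hCW i B0 (hOC i hBi)
      obtain ⟨A, hA, hxA⟩ := hcov x hxB
      rcases (hKQ hA).2 i hi with h | ⟨B, hB1, hB2, hB3⟩
      · exact h ⟨x, hxA, hxW⟩
      · exact hB3 ((hsat B0 B (hlΞ.eq_of_meet hhi hxB (hB1 hxA) (by rw [hB2, hB0])) i).1 hBi)
  refine ⟨P, Q, hP, hQ, ?_, fun A h => h.1, fun A h => h.1, ?_, ?_⟩
  · intro A h1 h2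
    by_cases hAQ : A ∈ Q
    · exact Or.inr hAQ
    · left
      have : ¬ ∀ i ∈ T, ¬ (A.1 ∩ W i).Nonempty ∨
        ∃ B : Subcontinua X, A.1 ⊆ B.1 ∧ l B = s ∧ B ∉ O i := fun h => hAQ ⟨⟨h1, h2⟩, h⟩
      push Not at this
      obtain ⟨i, hi, hAW, hB⟩ := this
      obtain ⟨B, hAB, hBs⟩ := exists_level hhi hl hlm (by simp only [s]; linarith : l A ≤ s) hs
      exact ⟨⟨h1, h2⟩, i, hi, B, hAB, hBs, hOC i (hB B hAB hBs),
        hAW.mono (inter_subset_inter_right _ subset_closure)⟩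
  · intro K hK hKc hPQ A hA A' hA' φ hφ
    have hsl : ∀ A ∈ K, a ≤ l A ∧ l A ≤ b := by
      rcases hPQ with h | h
      · exact fun A hA => (h hA).1
      · exact fun A hA => (h hA).1
    obtain ⟨B, hAB, hBs⟩ := exists_level hhi hl hlm
      (by have := (hsl A hA).2; simp only [s]; linarith : l A ≤ s) hs
    exact coarse hφ hlD hAB (key K hK hKc hPQ A hA B hAB hBs A' hA') (hsl A hA).1 (hsl A' hA').1
      hBs.le
  · intro K t hK hKc hKP ht A hA A' hA' ψ hψ
    obtain ⟨B0, hAB, hBs⟩ := exists_level hhi hl hlm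
      (by have := (hKP hA).1.2; simp only [s]; linarith : l A ≤ s) hs
    have hKB := key K hK hKc (Or.inl hKP) A hA B0 hAB hBs
    have hex : ∀ A ∈ K, ∃ i ∈ T, B0 ∈ C i ∧ (A.1 ∩ closure (W i)).Nonempty := by
      intro A hA
      obtain ⟨_, i, hi, B, hB1, hB2, hB3, hB4⟩ := hKP hA
      obtain ⟨z, hz⟩ := A.2.2.1
      exact ⟨i, hi, (hsat B B0 (hlΞ.eq_of_meet hhi (hB1 hz) (hKB A hA hz) (by rw [hB2, hBs])) i).2 hB3,
        hB4⟩
    choose! il hil1 hil2 hil3 using hex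
    have hpre := hKc.2.image (mx ψ) (continuous_mx ψ).continuousOn
    have := interval_sum (T.image j) (fun m => {r | ∃ A ∈ K, j (il A) = m ∧
          r = mx ψ A}) d hpre
          (by
            rintro _ ⟨z, hz, rfl⟩
            exact ⟨j (il z), Finset.mem_image_of_mem _ (hil1 z hz), z, hz, rfl, rfl⟩)
          (fun j _ => (hd j).le)
          (by
            rintro m _ _ ⟨x, hx, hxm, rfl⟩ _ ⟨y, hy, hym, rfl⟩
            have hWW : W (il x) = W (il y) := hCC _ _ B0 (hil2 x hx) (hil2 y hy) (by rw [hxm, hym])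
            have h1 := hWp (j (il x)) (W (il x)) (hW𝓦 _) x y (hil3 x hx)
              (by rw [hWW]; exact hil3 y hy)
              ((hl1τ _ _ (by rw [ht x hx, ht y hy])).trans (hττ _ (hil1 x hx))) ψ
              (Finset.mem_union_right _ hψ)
            rw [hxm] at h1
            exact h1.le)
          ⟨A, hA, rfl⟩ ⟨A', hA', rfl⟩
    have h2 := hdsum (T.image j)
    have h3 : δ' ≤ δ / 2 := min_le_left _ _
    linarith

end lems
end HS

namespace HS

section comb
variable {Y : Type u} [TopologicalSpace Y]

/-- a finite disjoint open family refining `U` -/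
def Fam (U F : Set (Set Y)) : Prop :=
  F.Finite ∧ (∀ s ∈ F, IsOpen s) ∧ F.PairwiseDisjoint id ∧ Refines F U

/-- `P` is covered by a finite disjoint open family refining `U` -/
def Small (U : Set (Set Y)) (P : Set Y) : Prop := ∃ F, Fam U F ∧ P ⊆ ⋃₀ F

theorem Small.mono {U : Set (Set Y)} {P P' : Set Y} (h : Small U P) (hP : P' ⊆ P) : Small U P' := by
  obtain ⟨F, hF, h⟩ := h
  exact ⟨F, hF, hP.trans h⟩

theorem Fam.inter {U F : Set (Set Y)} (hF : Fam U F) {N : Set Y} (hN : IsOpen N) :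
    Fam U ((fun s => s ∩ N) '' F) := by
  obtain ⟨h1, h2, h3, h4⟩ := hF
  refine ⟨h1.image _, ?_, ?_, ?_⟩
  · rintro _ ⟨s, hs, rfl⟩; exact (h2 s hs).inter hN
  · rintro _ ⟨s, hs, rfl⟩ _ ⟨t, ht, rfl⟩ hne
    have : s ≠ t := by rintro rfl; exact hne rfl
    exact (h3 hs ht this).mono inter_subset_left inter_subset_left
  · rintro _ ⟨s, hs, rfl⟩
    obtain ⟨u, hu, hsu⟩ := h4 s hs
    exact ⟨u, hu, inter_subset_left.trans hsu⟩

theorem small_empty (U : Set (Set Y)) : Small U (∅ : Set Y) :=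
  ⟨∅, ⟨Set.finite_empty, by simp, by simp, by intro v hv; exact absurd hv (by simp)⟩, by simp⟩

theorem Fam.union {U F G : Set (Set Y)} (hF : Fam U F) (hG : Fam U G)
    (hd : ∀ s ∈ F, ∀ t ∈ G, Disjoint s t) : Fam U (F ∪ G) := by
  refine ⟨hF.1.union hG.1, ?_, ?_, ?_⟩
  · rintro s (h | h)
    · exact hF.2.1 s h
    · exact hG.2.1 s h
  · rintro s (hs | hs) t (ht | ht) hne
    · exact hF.2.2.1 hs ht hne
    · exact hd s hs t ht
    · exact (hd t ht s hs).symm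
    · exact hG.2.2.1 hs ht hne
  · rintro s (h | h)
    · exact hF.2.2.2 s h
    · exact hG.2.2.2 s h

theorem Small.union [NormalSpace Y] {U : Set (Set Y)} {P Q : Set Y} (hP : Small U P)
    (hQ : Small U Q) (hPc : IsClosed P) (hQc : IsClosed Q) (hd : Disjoint P Q) :
    Small U (P ∪ Q) := by
  obtain ⟨V, W, hV, hW, hPV, hQW, hVW⟩ := normal_separation hPc hQc hd
  obtain ⟨F, hF, hPF⟩ := hP
  obtain ⟨G, hG, hQG⟩ := hQ
  refine ⟨_, (hF.inter hV).union (hG.inter hW) ?_, ?_⟩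
  · rintro _ ⟨s, hs, rfl⟩ _ ⟨t, ht, rfl⟩
    exact hVW.mono inter_subset_right inter_subset_right
  · rintro x (hx | hx)
    · obtain ⟨s, hs, hxs⟩ := hPF hx
      exact ⟨s ∩ V, Or.inl ⟨s, hs, rfl⟩, hxs, hPV hx⟩
    · obtain ⟨s, hs, hxs⟩ := hQG hx
      exact ⟨s ∩ W, Or.inr ⟨s, hs, rfl⟩, hxs, hQW hx⟩

theorem small_of_connected [CompactSpace Y] [T2Space Y] {U : Set (Set Y)} (hU : IsOpenCover U)
    {P : Set Y} (hP : IsClosed P)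
    (h : ∀ K : Set Y, IsClosed K → IsConnected K → K ⊆ P → ∃ u ∈ U, K ⊆ u) : Small U P := by
  have hPc : CompactSpace P := isCompact_iff_compactSpace.1 hP.isCompact
  have hem := hP.isClosedEmbedding_subtypeVal
  have hloc : ∀ x : P, ∃ Z : Set P, IsClopen Z ∧ x ∈ Z ∧ ∃ u ∈ U, (↑) '' Z ⊆ u := by
    intro x
    obtain ⟨u, hu, hKu⟩ := h ((↑) '' connectedComponent x)
      (hem.isClosedMap _ isClosed_connectedComponent)
      (isConnected_connectedComponent.image _ continuous_subtype_val.continuousOn)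
      (by rintro _ ⟨y, _, rfl⟩; exact y.2)
    have hne : Nonempty { s : Set P // IsClopen s ∧ x ∈ s } := ⟨⟨univ, isClopen_univ, trivial⟩⟩
    obtain ⟨⟨Z, hZ, haZ⟩, hZG⟩ := exists_subset_nhds_of_compactSpace
      (V := fun s : { s : Set P // IsClopen s ∧ x ∈ s } => s.1)
      (by
        intro s t
        exact ⟨⟨s.1 ∩ t.1, s.2.1.inter t.2.1, s.2.2, t.2.2⟩, inter_subset_left, inter_subset_right⟩)
      (fun s => s.2.1.1)
      (U := ((↑) ⁻¹' u : Set P))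
      (fun z hz => ((hU.1 u hu).preimage continuous_subtype_val).mem_nhds (by
        rw [← connectedComponent_eq_iInter_isClopen] at hz
        exact hKu ⟨z, hz, rfl⟩))
    exact ⟨Z, hZ, haZ, u, hu, by rintro _ ⟨y, hy, rfl⟩; exact hZG hy⟩
  choose Z hZ hxZ u hu hZu using hloc
  obtain ⟨t, -, ht⟩ := (isCompact_univ (X := P)).elim_nhds_subcover Z
    (fun x _ => (hZ x).2.mem_nhds (hxZ x))
  classical
  have key : ∀ t : Finset P, Small U ((↑) '' (⋃ x ∈ t, Z x) : Set Y) := by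
    intro t
    induction t using Finset.induction_on with
    | empty => simpa using small_empty U
    | insert a s ha ih =>
      have hcl : IsClopen (⋃ x ∈ s, Z x) := isClopen_biUnion_finset fun x _ => hZ x
      have h2 : Small U ((↑) '' (Z a \ ⋃ x ∈ s, Z x) : Set Y) := by
        refine ⟨{u a}, ⟨Set.finite_singleton _, ?_, by simp, ?_⟩, ?_⟩
        · intro s hs; rw [Set.mem_singleton_iff.1 hs]; exact hU.1 _ (hu a)
        · intro s hs; rw [Set.mem_singleton_iff.1 hs]; exact ⟨_, hu a, subset_rfl⟩
        · rw [Set.sUnion_singleton]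
          exact (Set.image_mono diff_subset).trans (hZu a)
      refine (ih.union h2 (hem.isClosedMap _ hcl.1)
        (hem.isClosedMap _ ((hZ a).diff hcl).1) ?_).mono ?_
      · rw [Set.disjoint_image_iff Subtype.val_injective]
        exact disjoint_sdiff_self_right
      · rw [← Set.image_union]
        apply Set.image_mono
        rw [Finset.set_biUnion_insert, Set.union_diff_self, Set.union_comm]
  refine (key t).mono ?_
  intro x hx
  exact ⟨⟨x, hx⟩, ht trivial, rfl⟩

theorem swell3 [NormalSpace Y] {A B C : Set Y} (hA : IsClosed A) (hB : IsClosed B) (hC : IsClosed C)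
    (h : A ∩ B ∩ C = ∅) : ∃ N1 N2 N3 : Set Y, IsOpen N1 ∧ IsOpen N2 ∧ IsOpen N3 ∧ A ⊆ N1 ∧ B ⊆ N2 ∧
      C ⊆ N3 ∧ N1 ∩ N2 ∩ N3 = ∅ := by
  obtain ⟨N1, V, hN1, hV, hAN, hBV, hd⟩ := normal_separation hA (hB.inter hC)
    (by rw [Set.disjoint_iff_inter_eq_empty, ← Set.inter_assoc]; exact h)
  obtain ⟨M2, M3, hM2, hM3, h2, h3, hd2⟩ := normal_separation (hB.sdiff hV) (hC.sdiff hV)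
    (by
      rw [Set.disjoint_left]
      rintro x ⟨hx, hxV⟩ ⟨hx', _⟩
      exact hxV (hBV ⟨hx, hx'⟩))
  refine ⟨N1, M2 ∪ V, M3 ∪ V, hN1, hM2.union hV, hM3.union hV, hAN, ?_, ?_, ?_⟩
  · intro x hx
    by_cases hxV : x ∈ V
    · exact Or.inr hxV
    · exact Or.inl (h2 ⟨hx, hxV⟩)
  · intro x hx
    by_cases hxV : x ∈ V
    · exact Or.inr hxV
    · exact Or.inl (h3 ⟨hx, hxV⟩)
  · rw [Set.eq_empty_iff_forall_notMem]
    rintro x ⟨⟨hx1, hx2⟩, hx3⟩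
    have hxV : x ∉ V := fun h => Set.disjoint_left.1 hd hx1 h
    exact Set.disjoint_left.1 hd2 (hx2.resolve_right hxV) (hx3.resolve_right hxV)

theorem Fam.ncard_le {U F : Set (Set Y)} (hF : Fam U F) (x : Y) :
    {v ∈ F | x ∈ v}.ncard ≤ 1 := by
  rw [Set.ncard_le_one (hF.1.subset (fun v hv => hv.1))]
  intro a ha b hb
  by_contra hne
  exact Set.disjoint_left.1 (hF.2.2.1 ha.1 hb.1 hne) ha.2 hb.2

theorem Fam.ncard_inter_zero {F : Set (Set Y)} {N : Set Y} {x : Y} (hx : x ∉ N) :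
    {v ∈ (fun s => s ∩ N) '' F | x ∈ v}.ncard = 0 := by
  have : {v ∈ (fun s => s ∩ N) '' F | x ∈ v} = ∅ := by
    rw [Set.eq_empty_iff_forall_notMem]
    rintro _ ⟨⟨s, hs, rfl⟩, h⟩
    exact hx h.2
  rw [this]; simp

theorem lemC [CompactSpace Y] [T2Space Y] {U : Set (Set Y)} (hU : IsOpenCover U) {P : Set Y}
    (hPc : IsClosed P) (hP : Small U P) : ∃ 𝓦 : Set (Set Y), IsOpenCover 𝓦 ∧
      ∀ Q P' Q' : Set Y, IsClosed Q → IsClosed P' → IsClosed Q' →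
        (∀ y, y ∈ P ∨ y ∈ Q ∨ y ∈ P' ∨ y ∈ Q') → Small U Q → Small U P' → Small U Q' →
        Small 𝓦 (Q ∩ P' ∩ Q') → ∃ V : Set (Set Y), V.Finite ∧ IsOpenCover V ∧ Refines V U ∧
          ∀ x, {v ∈ V | x ∈ v}.ncard ≤ 2 + 1 := by
  obtain ⟨F, hF, hPF⟩ := hP
  obtain ⟨O', hO', hPO, hOF⟩ := normal_exists_closure_subset hPc (isOpen_sUnion hF.2.1) hPF
  refine ⟨F ∪ (fun u => u \ closure O') '' U, ⟨?_, ?_⟩, ?_⟩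
  · rintro s (hs | ⟨u, hu, rfl⟩)
    · exact hF.2.1 s hs
    · exact (hU.1 u hu).sdiff isClosed_closure
  · rw [Set.eq_univ_iff_forall]
    intro y
    by_cases hy : y ∈ closure O'
    · obtain ⟨s, hs, hys⟩ := hOF hy
      exact ⟨s, Or.inl hs, hys⟩
    · have : y ∈ ⋃₀ U := by rw [hU.2]; trivial
      obtain ⟨u, hu, hyu⟩ := this
      exact ⟨_, Or.inr ⟨u, hu, rfl⟩, hyu, hy⟩
  intro Q P' Q' hQc hPc' hQc' hcov ⟨F2, hF2, hQF2⟩ ⟨F3, hF3, hPF3⟩ ⟨F4, hF4, hQF4⟩ ⟨G, hG, hGc⟩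
  let N : Set Y → Set Y := fun a => (a ∩ O') ∪ ⋃₀ {g ∈ G | g ⊆ a}
  have hNa : ∀ a, N a ⊆ a := by
    rintro a x (hx | ⟨g, hg, hx⟩)
    · exact hx.1
    · exact hg.2 hx
  have hFam1 : Fam U (N '' F) := by
    refine ⟨hF.1.image _, ?_, ?_, ?_⟩
    · rintro _ ⟨a, ha, rfl⟩
      exact ((hF.2.1 a ha).inter hO').union (isOpen_sUnion fun g hg => hG.2.1 g hg.1)
    · rintro _ ⟨a, ha, rfl⟩ _ ⟨b, hb, rfl⟩ hne
      have : a ≠ b := by rintro rfl; exact hne rfl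
      exact (hF.2.2.1 ha hb this).mono (hNa a) (hNa b)
    · rintro _ ⟨a, ha, rfl⟩
      obtain ⟨u, hu, hau⟩ := hF.2.2.2 a ha
      exact ⟨u, hu, (hNa a).trans hau⟩
  have hG2 : ∀ g ∈ G, (∀ a ∈ F, ¬ g ⊆ a) → ∃ u ∈ U, g ⊆ u \ closure O' := by
    intro g hg hga
    obtain ⟨w, hw | ⟨u, hu, rfl⟩, hgw⟩ := hG.2.2.2 g hg
    · exact absurd hgw (hga w hw)
    · exact ⟨u, hu, hgw⟩
  have hFam2 : Fam U {g ∈ G | ∀ a ∈ F, ¬ g ⊆ a} := by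
    refine ⟨hG.1.subset fun g hg => hg.1, fun g hg => hG.2.1 g hg.1,
      hG.2.2.1.subset fun g hg => hg.1, ?_⟩
    rintro g ⟨hg, hga⟩
    obtain ⟨u, hu, hgu⟩ := hG2 g hg hga
    exact ⟨u, hu, hgu.trans diff_subset⟩
  have hFam := hFam1.union hFam2 (by
    rintro _ ⟨a, ha, rfl⟩ g ⟨hg, hga⟩
    rw [Set.disjoint_left]
    rintro x (hx | ⟨g', hg', hx⟩) hxg
    · obtain ⟨u, hu, hgu⟩ := hG2 g hg hga
      exact (hgu hxg).2 (subset_closure hx.2)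
    · have : g' ≠ g := by rintro rfl; exact hga a ha hg'.2
      exact Set.disjoint_left.1 (hG.2.2.1 hg'.1 hg this) hx hxg)
  set F1 := N '' F ∪ {g ∈ G | ∀ a ∈ F, ¬ g ⊆ a} with hF1
  have hPF1 : P ⊆ ⋃₀ F1 := by
    intro x hx
    obtain ⟨a, ha, hxa⟩ := hPF hx
    exact ⟨N a, Or.inl ⟨a, ha, rfl⟩, Or.inl ⟨hxa, hPO hx⟩⟩
  have hGF1 : ⋃₀ G ⊆ ⋃₀ F1 := by
    rintro x ⟨g, hg, hx⟩
    by_cases hga : ∀ a ∈ F, ¬ g ⊆ a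
    · exact ⟨g, Or.inr ⟨hg, hga⟩, hx⟩
    · push Not at hga
      obtain ⟨a, ha, hga⟩ := hga
      exact ⟨N a, Or.inl ⟨a, ha, rfl⟩, Or.inr ⟨g, ⟨hg, hga⟩, hx⟩⟩
  obtain ⟨N2, N3, N4, hN2, hN3, hN4, h2, h3, h4, hN⟩ := swell3
    (hQc.sdiff (isOpen_sUnion hG.2.1)) hPc' hQc' (by
      rw [Set.eq_empty_iff_forall_notMem]
      rintro x ⟨⟨⟨hx1, hx2⟩, hx3⟩, hx4⟩
      exact hx2 (hGc ⟨⟨hx1, hx3⟩, hx4⟩))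
  have hI2 := hF2.inter hN2
  have hI3 := hF3.inter hN3
  have hI4 := hF4.inter hN4
  set I2 := (fun s => s ∩ N2) '' F2 with hI2d
  set I3 := (fun s => s ∩ N3) '' F3 with hI3d
  set I4 := (fun s => s ∩ N4) '' F4 with hI4d
  refine ⟨F1 ∪ (I2 ∪ (I3 ∪ I4)), hFam.1.union (hI2.1.union (hI3.1.union hI4.1)), ⟨?_, ?_⟩, ?_, ?_⟩
  · rintro s (hs | hs | hs | hs)
    · exact hFam.2.1 s hs
    · exact hI2.2.1 s hs
    · exact hI3.2.1 s hs
    · exact hI4.2.1 s hs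
  · rw [Set.eq_univ_iff_forall]
    intro y
    rcases hcov y with hy | hy | hy | hy
    · obtain ⟨s, hs, h⟩ := hPF1 hy
      exact ⟨s, Or.inl hs, h⟩
    · by_cases hyG : y ∈ ⋃₀ G
      · obtain ⟨s, hs, h⟩ := hGF1 hyG
        exact ⟨s, Or.inl hs, h⟩
      · obtain ⟨s, hs, h⟩ := hQF2 hy
        exact ⟨s ∩ N2, Or.inr (Or.inl ⟨s, hs, rfl⟩), h, h2 ⟨hy, hyG⟩⟩
    · obtain ⟨s, hs, h⟩ := hPF3 hy
      exact ⟨s ∩ N3, Or.inr (Or.inr (Or.inl ⟨s, hs, rfl⟩)), h, h3 hy⟩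
    · obtain ⟨s, hs, h⟩ := hQF4 hy
      exact ⟨s ∩ N4, Or.inr (Or.inr (Or.inr ⟨s, hs, rfl⟩)), h, h4 hy⟩
  · rintro s (hs | hs | hs | hs)
    · exact hFam.2.2.2 s hs
    · exact hI2.2.2.2 s hs
    · exact hI3.2.2.2 s hs
    · exact hI4.2.2.2 s hs
  · intro x
    have e : {v ∈ F1 ∪ (I2 ∪ (I3 ∪ I4)) | x ∈ v} = {v ∈ F1 | x ∈ v} ∪ ({v ∈ I2 | x ∈ v} ∪
        ({v ∈ I3 | x ∈ v} ∪ {v ∈ I4 | x ∈ v})) := by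
      ext v; simp only [mem_setOf_eq, mem_union]; tauto
    have c0 := Set.ncard_union_le {v ∈ F1 | x ∈ v} ({v ∈ I2 | x ∈ v} ∪
        ({v ∈ I3 | x ∈ v} ∪ {v ∈ I4 | x ∈ v}))
    have c1 := Set.ncard_union_le {v ∈ I2 | x ∈ v} ({v ∈ I3 | x ∈ v} ∪ {v ∈ I4 | x ∈ v})
    have c2 := Set.ncard_union_le {v ∈ I3 | x ∈ v} {v ∈ I4 | x ∈ v}
    have b1 := hFam.ncard_le x
    have b2 := hI2.ncard_le x
    have b3 := hI3.ncard_le x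
    have b4 := hI4.ncard_le x
    rw [e]
    have : x ∉ N2 ∨ x ∉ N3 ∨ x ∉ N4 := by
      by_contra hcon
      push Not at hcon
      have : x ∈ N2 ∩ N3 ∩ N4 := ⟨⟨hcon.1, hcon.2.1⟩, hcon.2.2⟩
      rw [hN] at this; exact this
    rcases this with h | h | h
    · have : {v ∈ I2 | x ∈ v}.ncard = 0 := Fam.ncard_inter_zero h
      omega
    · have : {v ∈ I3 | x ∈ v}.ncard = 0 := Fam.ncard_inter_zero h
      omega
    · have : {v ∈ I4 | x ∈ v}.ncard = 0 := Fam.ncard_inter_zero h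
      omega

end comb
end HS

namespace HS

theorem small_biUnion {Y : Type u} [TopologicalSpace Y] [NormalSpace Y] {U : Set (Set Y)}
    {ι : Type*} (I : Finset ι) (R : ι → Set Y) (hc : ∀ i ∈ I, IsClosed (R i))
    (hs : ∀ i ∈ I, Small U (R i)) (hd : ∀ i ∈ I, ∀ j ∈ I, i ≠ j → Disjoint (R i) (R j)) :
    Small U (⋃ i ∈ I, R i) := by
  classical
  induction I using Finset.induction_on with
  | empty => simpa using small_empty U
  | insert a s ha ih =>
    rw [Finset.set_biUnion_insert]
    have h1 := ih (fun i hi => hc i (Finset.mem_insert_of_mem hi))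
      (fun i hi => hs i (Finset.mem_insert_of_mem hi))
      (fun i hi j hj => hd i (Finset.mem_insert_of_mem hi) j (Finset.mem_insert_of_mem hj))
    refine (hs a (Finset.mem_insert_self _ _)).union h1 (hc a (Finset.mem_insert_self _ _))
      (Set.Finite.isClosed_biUnion s.finite_toSet
        fun i hi => hc i (Finset.mem_insert_of_mem hi)) ?_
    rw [Set.disjoint_iUnion₂_right]
    intro i hi
    exact hd a (Finset.mem_insert_self _ _) i (Finset.mem_insert_of_mem hi)
      (by rintro rfl; exact ha hi)

section up
variable {X : Type u} [TopologicalSpace X] [CompactSpace X] [T2Space X] [ConnectedSpace X]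

theorem slab_disjoint {l : Subcontinua X → ℝ} {R : ℤ → Set (Subcontinua X)} {a b : ℤ → ℝ}
    (hR : ∀ i, ∀ A ∈ R i, a i ≤ l A ∧ l A ≤ b i) (hab : ∀ i j : ℤ, i + 1 ≤ j → b i < a j) :
    ∀ i j : ℤ, i ≠ j → Disjoint (R i) (R j) := by
  intro i j hij
  rw [Set.disjoint_left]
  intro A hi hj
  have h1 := hR i A hi
  have h2 := hR j A hj
  rcases lt_or_gt_of_ne hij with h | h
  · have := hab i j h; linarith
  · have := hab j i h; linarith

theorem upper (hhi : HereditarilyIndecomposable X) (hC : IsCSpace (Subcontinua X)) :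
    CovDimLE (Subcontinua X) 2 := by
  intro U hUf hU
  obtain ⟨Φ, ε, hε, hΦ⟩ := leb U hU
  let θ := ε / 5
  have hθ : 0 < θ := by simp only [θ]; linarith
  have hθε : ε = 5 * θ := by simp only [θ]; ring
  have small1 : ∀ (R : Set (Subcontinua X)) (c : ℝ), IsClosed R → c < ε →
      (∀ K : Set (Subcontinua X), IsClosed K → IsConnected K → K ⊆ R →
        ∀ A ∈ K, ∀ A' ∈ K, ∀ φ ∈ Φ, |mx φ A - mx φ A'| ≤ c) → Small U R := by
    intro R c hR hc h
    refine small_of_connected hU hR fun K hK hKc hKR => ?_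
    obtain ⟨A, hA⟩ := hKc.1
    obtain ⟨u, hu, hu2⟩ := hΦ A
    exact ⟨u, hu, fun A' hA' => hu2 A' fun ξ hξ => (h K hK hKc hKR A' hA' A hA ξ hξ).trans_lt hc⟩
  obtain ⟨l1, hl1, hl1b, hs1⟩ := lemA hhi hC Φ ∅ hθ one_pos
  have hs1' := fun i : ℤ => hs1 (2 * i * θ - θ / 4) ((2 * i + 1) * θ + θ / 4)
  choose P1 Q1 hP1 hQ1 hPQ1 hP1s hQ1s hK1 _ using hs1'
  -- bound, independent of l2
  obtain ⟨M, hM⟩ := (isCompact_univ (X := Subcontinua X)).exists_bound_of_continuousOn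
    (continuous_sm (X := X) Φ).continuousOn
  obtain ⟨n, hn⟩ := exists_nat_gt ((M + θ) / θ + 2)
  let I : Finset ℤ := Finset.Icc (-n) n
  have hPd := slab_disjoint hP1s (by
    intro i j hij
    have : (i : ℝ) + 1 ≤ j := by exact_mod_cast hij
    nlinarith)
  have hQd := slab_disjoint hQ1s (by
    intro i j hij
    have : (i : ℝ) + 1 ≤ j := by exact_mod_cast hij
    nlinarith)
  have hPsm : ∀ i, Small U (P1 i) := fun i => small1 _ (5 / 2 * θ) (hP1 i) (by linarith)
    (fun K hK hKc hKP A hA A' hA' φ hφ =>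
      (hK1 i K hK hKc (Or.inl hKP) A hA A' hA' φ hφ).trans (by linarith))
  have hQsm : ∀ i, Small U (Q1 i) := fun i => small1 _ (5 / 2 * θ) (hQ1 i) (by linarith)
    (fun K hK hKc hKP A hA A' hA' φ hφ =>
      (hK1 i K hK hKc (Or.inr hKP) A hA A' hA' φ hφ).trans (by linarith))
  obtain ⟨𝓦, h𝓦, hcomb⟩ := lemC hU (P := ⋃ i ∈ I, P1 i)
    (Set.Finite.isClosed_biUnion I.finite_toSet fun i _ => hP1 i)
    (small_biUnion I P1 (fun i _ => hP1 i) (fun i _ => hPsm i) (fun i _ j _ => hPd i j))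
  obtain ⟨Ψ, δ, hδ, hΨ⟩ := leb 𝓦 h𝓦
  obtain ⟨l2, hl2, hl2b, hs2⟩ := lemA hhi hC Φ Ψ hθ hδ
  have hs2' := fun i : ℤ => hs2 ((2 * i + 1) * θ) ((2 * i + 2) * θ)
  choose P2 Q2 hP2 hQ2 hPQ2 hP2s hQ2s hK2 hK2f using hs2'
  have hP2d := slab_disjoint hP2s (by
    intro i j hij
    have : (i : ℝ) + 1 ≤ j := by exact_mod_cast hij
    nlinarith)
  have hQ2d := slab_disjoint hQ2s (by
    intro i j hij
    have : (i : ℝ) + 1 ≤ j := by exact_mod_cast hij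
    nlinarith)
  have hP2sm : ∀ i, Small U (P2 i) := fun i => small1 _ (2 * θ) (hP2 i) (by linarith)
    (fun K hK hKc hKP A hA A' hA' φ hφ =>
      (hK2 i K hK hKc (Or.inl hKP) A hA A' hA' φ hφ).trans (by linarith))
  have hQ2sm : ∀ i, Small U (Q2 i) := fun i => small1 _ (2 * θ) (hQ2 i) (by linarith)
    (fun K hK hKc hKP A hA A' hA' φ hφ =>
      (hK2 i K hK hKc (Or.inr hKP) A hA A' hA' φ hφ).trans (by linarith))
  let E : ℤ → Set (Subcontinua X) := fun i => Q1 i ∩ {A | 2 * i * θ ≤ l2 A ∧ l2 A ≤ (2 * i + 1) * θ}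
  have hE : ∀ i, IsClosed (E i) := fun i => (hQ1 i).inter
    ((_root_.isClosed_le continuous_const hl2).inter (_root_.isClosed_le hl2 continuous_const))
  have hEd : ∀ i j, i ≠ j → Disjoint (E i) (E j) := fun i j hij =>
    (hQd i j hij).mono inter_subset_left inter_subset_left
  apply hcomb (⋃ i ∈ I, E i) (⋃ i ∈ I, P2 i) (⋃ i ∈ I, Q2 i)
    (Set.Finite.isClosed_biUnion I.finite_toSet fun i _ => hE i)
    (Set.Finite.isClosed_biUnion I.finite_toSet fun i _ => hP2 i)
    (Set.Finite.isClosed_biUnion I.finite_toSet fun i _ => hQ2 i)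
  · -- covering
    intro A
    have hMA := abs_le.1 (hM A trivial)
    have h1 := abs_le.1 (hl1b A)
    have h2 := abs_le.1 (hl2b A)
    have hk1 := Int.floor_le (l2 A / θ)
    have hk2 := Int.lt_floor_add_one (l2 A / θ)
    generalize ⌊l2 A / θ⌋ = k at hk1 hk2
    rw [le_div_iff₀ hθ] at hk1
    rw [div_lt_iff₀ hθ] at hk2
    have hn' : M + θ + 2 * θ < n * θ := by
      have := mul_lt_mul_of_pos_right hn hθ
      rw [add_mul, div_mul_cancel₀ _ hθ.ne'] at this
      exact this
    have hkn : k < n := by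
      have : (k : ℝ) < n := by nlinarith
      exact_mod_cast this
    have hkn2 : -(n : ℤ) < k := by
      have : -(n : ℝ) < k := by nlinarith
      exact_mod_cast this
    simp only [mem_iUnion, exists_prop]
    obtain ⟨i, hi | hi⟩ : ∃ i : ℤ, k = 2 * i ∨ k = 2 * i + 1 := ⟨k / 2, by omega⟩
    · have hiI : i ∈ I := by simp only [I, Finset.mem_Icc]; omega
      have hki : (k : ℝ) = 2 * i := by rw [hi]; push_cast; ring
      rw [hki] at hk1 hk2
      rcases hPQ1 i A (by linarith) (by linarith) with h | h
      · exact Or.inl ⟨i, hiI, h⟩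
      · exact Or.inr (Or.inl ⟨i, hiI, h, hk1, hk2.le⟩)
    · have hiI : i ∈ I := by simp only [I, Finset.mem_Icc]; omega
      have hki : (k : ℝ) = 2 * i + 1 := by rw [hi]; push_cast; ring
      rw [hki] at hk1 hk2
      rcases hPQ2 i A (by linarith) (by linarith) with h | h
      · exact Or.inr (Or.inr (Or.inl ⟨i, hiI, h⟩))
      · exact Or.inr (Or.inr (Or.inr ⟨i, hiI, h⟩))
  · exact small_biUnion I E (fun i _ => hE i) (fun i _ => (hQsm i).mono inter_subset_left)
      (fun i _ j _ => hEd i j)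
  · exact small_biUnion I P2 (fun i _ => hP2 i) (fun i _ => hP2sm i) (fun i _ j _ => hP2d i j)
  · exact small_biUnion I Q2 (fun i _ => hQ2 i) (fun i _ => hQ2sm i) (fun i _ j _ => hQ2d i j)
  · have hfin : Small 𝓦 (⋃ p ∈ I ×ˢ I, E p.1 ∩ P2 p.2) := by
      apply small_biUnion (I ×ˢ I) (fun p => E p.1 ∩ P2 p.2)
      · intro p _; exact (hE _).inter (hP2 _)
      · rintro ⟨i', i⟩ _
        have hconst : ∃ t, ∀ A ∈ E i' ∩ P2 i, l2 A = t := by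
          refine ⟨if i' ≤ i then (2 * i + 1) * θ else (2 * i + 2) * θ, ?_⟩
          rintro A ⟨⟨_, h1, h2⟩, h3⟩
          have h4 := hP2s i A h3
          split_ifs with hii
          · have : (i' : ℝ) ≤ i := by exact_mod_cast hii
            nlinarith
          · have : (i : ℝ) + 1 ≤ i' := by
              have : i + 1 ≤ i' := by omega
              exact_mod_cast this
            nlinarith
        obtain ⟨t, ht⟩ := hconst
        refine small_of_connected h𝓦 ((hE _).inter (hP2 _)) fun K hK hKc hKR => ?_
        obtain ⟨A, hA⟩ := hKc.1
        obtain ⟨u, hu, hu2⟩ := hΨ A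
        exact ⟨u, hu, fun A' hA' => hu2 A' fun ξ hξ => hK2f i K t hK hKc
          (hKR.trans inter_subset_right) (fun B hB => ht B (hKR hB)) A' hA' A hA ξ hξ⟩
      · rintro ⟨i', i⟩ _ ⟨j', j⟩ _ hne
        by_cases h : i' = j'
        · have hij : i ≠ j := by rintro rfl; exact hne (by rw [h])
          exact (hP2d i j hij).mono inter_subset_right inter_subset_right
        · exact (hEd i' j' h).mono inter_subset_left inter_subset_left
    refine hfin.mono ?_
    rintro A ⟨⟨h1, h2⟩, _⟩
    simp only [mem_iUnion, exists_prop] at h1 h2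
    obtain ⟨i', hi', h1⟩ := h1
    obtain ⟨i, hi, h2⟩ := h2
    simp only [mem_iUnion, exists_prop]
    exact ⟨(i', i), Finset.mk_mem_product hi' hi, h1, h2⟩

end up
end HS

namespace HS

theorem branch {Y : Type*} [TopologicalSpace Y] [PreconnectedSpace Y] {L w : Y → ℂ}
    (hL : Continuous L) (hw : Continuous w) (he : ∀ y, Complex.exp (L y) = w y) (c : ℂ)
    (hc : ∀ y, 0 < (c * w y).re) (y y' : Y) :
    (L y).im - (L y').im = (c * w y).arg - (c * w y').arg := by
  have hcont : Continuous fun y => L y - Complex.log (c * w y) := by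
    apply hL.sub
    exact Continuous.clog (continuous_const.mul hw) fun y => Or.inl (hc y)
  have hne : ∀ y, c * w y ≠ 0 := fun y h => by
    have := hc y
    rw [h] at this
    simp at this
  have hcov := Complex.isCoveringMap_exp
  have := hcov.const_of_comp hcont (fun a a' => by
    apply Subtype.ext
    change Complex.exp _ = Complex.exp _
    rw [Complex.exp_sub, Complex.exp_sub, Complex.exp_log (hne a), Complex.exp_log (hne a'), he, he]
    have h1 := hne a
    have h2 := hne a'
    have h3 : c ≠ 0 := left_ne_zero_of_mul h1
    have h4 := right_ne_zero_of_mul h1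
    have h5 := right_ne_zero_of_mul h2
    field_simp) y y'
  have h2 := congrArg Complex.im this
  simp only [Complex.sub_im, Complex.log_im] at h2
  linarith

/-- a primitive cube root of unity -/
noncomputable def om : ℂ := ⟨-1 / 2, √3 / 2⟩

/-- its conjugate -/
noncomputable def om2 : ℂ := ⟨-1 / 2, -(√3 / 2)⟩

theorem om_om : om * om = om2 := by
  have : √3 * √3 = 3 := Real.mul_self_sqrt (by norm_num)
  apply Complex.ext <;> simp [om, om2] <;> nlinarith

theorem om_om2 : om * om2 = 1 := by
  have : √3 * √3 = 3 := Real.mul_self_sqrt (by norm_num)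
  apply Complex.ext <;> simp [om, om2] <;> nlinarith

theorem om2_om2 : om2 * om2 = om := by
  have : √3 * √3 = 3 := Real.mul_self_sqrt (by norm_num)
  apply Complex.ext <;> simp [om, om2] <;> nlinarith

/-- the purely topological part of the lower bound -/
theorem no_lift {X : Type*} [TopologicalSpace X] [ConnectedSpace X] (p q : X)
    (F : Fin 3 → unitInterval × X → ℝ) (hF : ∀ i, Continuous (F i)) (h0 : ∀ i z, 0 ≤ F i z)
    (hsome : ∀ z, ∃ i, F i z ≠ 0) (hzero : ∀ z, ∃ i, F i z = 0)
    (htop : ∀ i x y, F i (0, x) = F i (0, y))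
    (htop0 : ∀ x, F 0 (0, x) = 0) (htop2 : ∀ x, F 2 (0, x) = 0)
    (hp : ∀ t, F 2 (t, p) = 0) (hq : ∀ t, F 0 (t, q) = 0) (hs : ∀ x, F 1 (1, x) = 0) : False := by
  let w : unitInterval × X → ℂ := fun z => F 0 z + F 1 z * om + F 2 z * om2
  have hw : Continuous w := by
    have := hF 0
    have := hF 1
    have := hF 2
    fun_prop
  have hs' : ∀ z, 0 < F 0 z + F 1 z + F 2 z := by
    intro z
    have h1 := h0 0 z
    have h2 := h0 1 z
    have h3 := h0 2 z
    rcases hsome z with ⟨i, hi⟩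
    have := lt_of_le_of_ne (h0 i z) (Ne.symm hi)
    fin_cases i <;> simp at this <;> linarith
  have r1 : ∀ z, F 2 z = 0 → 0 < (-om * w z).re := by
    intro z hz
    have := hs' z
    have e : -om * w z = F 0 z * (-om) + F 1 z * (-om2) := by
      simp only [w, hz]; rw [← om_om]; push_cast; ring
    rw [e, hz] at *
    simp [om, om2]
    linarith
  have r2 : ∀ z, F 0 z = 0 → 0 < (-1 * w z).re := by
    intro z hz
    have := hs' z
    have e : -1 * w z = F 1 z * (-om) + F 2 z * (-om2) := by
      simp only [w, hz]; push_cast; ring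
    rw [e, hz] at *
    simp [om, om2]
    linarith
  have r3 : ∀ z, F 1 z = 0 → 0 < (-om2 * w z).re := by
    intro z hz
    have := hs' z
    have e : -om2 * w z = F 0 z * (-om2) + F 2 z * (-om) := by
      simp only [w, hz]; rw [← om2_om2]; push_cast; ring
    rw [e, hz] at *
    simp [om, om2]
    linarith
  have hne : ∀ z, w z ≠ 0 := by
    intro z hz
    obtain ⟨i, hi⟩ := hzero z
    fin_cases i
    · have := r2 z hi
      simp [hz] at this
    · have := r3 z hi
      simp [hz] at this
    · have := r1 z hi
      simp [hz] at this
  let H : C(unitInterval × X, {z : ℂ // z ≠ 0}) := ⟨fun z => ⟨w z, hne z⟩, by fun_prop⟩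
  have hwtop : ∀ x, w (0, x) = w (0, p) := fun x => by simp only [w, htop _ x p]
  let Lf := Complex.isCoveringMap_exp.liftHomotopy H (.const X (Complex.log (w (0, p)))) (by
    intro a
    apply Subtype.ext
    change w (0, a) = Complex.exp (Complex.log (w (0, p)))
    rw [Complex.exp_log (hne _), hwtop])
  have hL1 : ∀ z, Complex.exp (Lf z) = w z := fun z =>
    congrArg Subtype.val (congrFun (Complex.isCoveringMap_exp.liftHomotopy_lifts H _ _) z)
  have hL0 : ∀ x, Lf (0, x) = Complex.log (w (0, p)) := fun x =>
    Complex.isCoveringMap_exp.liftHomotopy_zero H _ _ x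
  have hLc : Continuous Lf := Lf.continuous
  have b1 := branch (L := fun t : unitInterval => Lf (t, p)) (w := fun t => w (t, p))
    (by fun_prop) (by fun_prop) (fun t => hL1 _) (-om) (fun t => r1 _ (hp t)) 1 0
  have b2 := branch (L := fun t : unitInterval => Lf (t, q)) (w := fun t => w (t, q))
    (by fun_prop) (by fun_prop) (fun t => hL1 _) (-1) (fun t => r2 _ (hq t)) 1 0
  have b3 := branch (L := fun x : X => Lf (1, x)) (w := fun x => w (1, x))
    (by fun_prop) (by fun_prop) (fun t => hL1 _) (-om2) (fun t => r3 _ (hs t)) p q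
  simp only [hL0] at b1 b2
  have fp : 0 < F 0 (1, p) := by have := hs' (1, p); rw [hp, hs] at this; linarith
  have fq : 0 < F 2 (1, q) := by have := hs' (1, q); rw [hq, hs] at this; linarith
  have ft : ∀ x, 0 < F 1 (0, x) := fun x => by
    have := hs' (0, x); rw [htop0, htop2] at this; linarith
  have wp : w (1, p) = F 0 (1, p) := by simp [w, hp, hs]
  have wq : w (1, q) = F 2 (1, q) * om2 := by simp [w, hq, hs]
  have wt : ∀ x, w (0, x) = F 1 (0, x) * om := fun x => by simp [w, htop0, htop2]
  rw [wp, wt, show -om * (F 0 (1, p) : ℂ) = F 0 (1, p) * (-om) by ring,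
    show -om * (F 1 (0, p) * om) = F 1 (0, p) * (-om2) by rw [← om_om]; ring,
    Complex.arg_real_mul _ fp, Complex.arg_real_mul _ (ft p)] at b1
  rw [wq, wt q, show -1 * (F 2 (1, q) * om2 : ℂ) = F 2 (1, q) * (-om2) by ring,
    show -1 * (F 1 (0, q) * om) = F 1 (0, q) * (-om) by ring,
    Complex.arg_real_mul _ fq, Complex.arg_real_mul _ (ft q)] at b2
  rw [wp, wq, show -om2 * (F 0 (1, p) : ℂ) = F 0 (1, p) * (-om2) by ring,
    show -om2 * (F 2 (1, q) * om2) = F 2 (1, q) * (-om) by rw [← om2_om2]; ring,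
    Complex.arg_real_mul _ fp, Complex.arg_real_mul _ fq] at b3
  have a1 : Complex.arg (-om) < 0 := by
    rw [Complex.arg_neg_iff]; simp [om]
  have a2 : 0 ≤ Complex.arg (-om2) := by
    rw [Complex.arg_nonneg_iff]; simp [om2]; positivity
  rw [← wt] at b1
  linarith

variable {X : Type u} [TopologicalSpace X] [CompactSpace X] [T2Space X] [ConnectedSpace X]

theorem lower (hhi : HereditarilyIndecomposable X) {p q : X} (hpq : p ≠ q) :
    ¬ CovDimLE (Subcontinua X) 1 := by
  intro hdim
  obtain ⟨φ, hφ0, hφ1, -⟩ := exists_continuous_zero_one_of_isClosed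
    (isClosed_singleton (x := p)) (isClosed_singleton (x := q)) (by simpa using hpq)
  have hφp : φ p = 0 := hφ0 rfl
  have hφq : φ q = 1 := hφ1 rfl
  let U : Fin 3 → Set (Subcontinua X) :=
    ![{A | mx φ A < 1}, {A | 0 < mx φ A + mx (-φ) A}, {A | mx (-φ) A < 0}]
  have hUo : ∀ i, IsOpen (U i) := by
    have h1 := continuous_mx φ
    have h2 := continuous_mx (-φ)
    intro i
    fin_cases i
    · exact isOpen_lt h1 continuous_const
    · exact isOpen_lt continuous_const (h1.add h2)
    · exact isOpen_lt h2 continuous_const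
  have hUc : _root_.IsOpenCover (range U) := by
    refine ⟨by rintro _ ⟨i, rfl⟩; exact hUo i, ?_⟩
    rw [eq_univ_iff_forall]
    intro A
    by_cases h1 : mx φ A < 1
    · exact ⟨U 0, ⟨0, rfl⟩, h1⟩
    by_cases h2 : mx (-φ) A < 0
    · exact ⟨U 2, ⟨2, rfl⟩, h2⟩
    · refine ⟨U 1, ⟨1, rfl⟩, ?_⟩
      change 0 < mx φ A + mx (-φ) A
      linarith
  have hUp : ∀ B : Subcontinua X, p ∈ B.1 → B ∉ U 2 := by
    intro B hB h
    have h1 : mx (-φ) B < 0 := h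
    have h2 := le_mx (-φ) B hB
    simp [hφp] at h2
    linarith
  have hUq : ∀ B : Subcontinua X, q ∈ B.1 → B ∉ U 0 := by
    intro B hB h
    have h1 : mx φ B < 1 := h
    have h2 := le_mx φ B hB
    linarith
  have hUs : ∀ x, sing x ∉ U 1 := by
    intro x h
    have h1 : 0 < mx φ (sing x) + mx (-φ) (sing x) := h
    obtain ⟨y, hy, hy'⟩ := exists_mx φ (sing x)
    obtain ⟨z, hz, hz'⟩ := exists_mx (-φ) (sing x)
    have hy : y = x := hy
    have hz : z = x := hz
    subst hy hz
    simp at hz'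
    linarith
  obtain ⟨V, hVf, hVc, hVr, hVn⟩ := hdim (range U) (finite_range U) hUc
  have hVr' : ∀ v ∈ V, ∃ i, v ⊆ U i := by
    intro v hv
    obtain ⟨_, ⟨i, rfl⟩, h⟩ := hVr v hv
    exact ⟨i, h⟩
  choose! ix hix using hVr'
  let G : Fin 3 → Set (Subcontinua X) := fun j => ⋃₀ {v ∈ V | ix v = j}
  have hGU : ∀ j, G j ⊆ U j := by
    rintro j A ⟨v, ⟨hv, rfl⟩, hA⟩
    exact hix v hv hA
  have hGc : _root_.IsOpenCover (range G) := by
    constructor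
    · rintro _ ⟨j, rfl⟩
      exact isOpen_sUnion fun v hv => hVc.1 v hv.1
    · rw [eq_univ_iff_forall]
      intro A
      have : A ∈ ⋃₀ V := by rw [hVc.2]; trivial
      obtain ⟨v, hv, hA⟩ := this
      exact ⟨G (ix v), ⟨_, rfl⟩, v, ⟨hv, rfl⟩, hA⟩
  have hG3 : ∀ A, ∃ j, A ∉ G j := by
    intro A
    by_contra! h
    obtain ⟨v0, ⟨hv0, e0⟩, hA0⟩ := h 0
    obtain ⟨v1, ⟨hv1, e1⟩, hA1⟩ := h 1
    obtain ⟨v2, ⟨hv2, e2⟩, hA2⟩ := h 2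
    have n01 : v0 ≠ v1 := by rintro rfl; rw [e0] at e1; exact absurd e1 (by decide)
    have n02 : v0 ≠ v2 := by rintro rfl; rw [e0] at e2; exact absurd e2 (by decide)
    have n12 : v1 ≠ v2 := by rintro rfl; rw [e1] at e2; exact absurd e2 (by decide)
    have hfin : {v ∈ V | A ∈ v}.Finite := by
      apply Set.Finite.subset hVf
      exact fun v hv => hv.1
    have h3 : ({v0, v1, v2} : Set (Set (Subcontinua X))).ncard = 3 := by
      rw [Set.ncard_eq_three]
      exact ⟨v0, v1, v2, n01, n02, n12, rfl⟩
    have h4 : ({v0, v1, v2} : Set (Set (Subcontinua X))).ncard ≤ {v ∈ V | A ∈ v}.ncard := by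
      apply Set.ncard_le_ncard _ hfin
      rintro v (rfl | rfl | rfl)
      · exact ⟨hv0, hA0⟩
      · exact ⟨hv1, hA1⟩
      · exact ⟨hv2, hA2⟩
    have := hVn A
    omega
  obtain ⟨S, ε, hε, hleb⟩ := leb _ hGc
  let Θ : Subcontinua X → (S → ℝ) := fun A ξ => mx ξ.1 A
  have hΘ : Continuous Θ := continuous_pi fun ξ => continuous_mx ξ.1
  let f : Fin 3 → Subcontinua X → ℝ := fun i A => Metric.infDist (Θ A) (Θ '' (G i)ᶜ)
  have hf : ∀ i, Continuous (f i) := fun i => (Metric.continuous_infDist_pt _).comp hΘ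
  have hfz : ∀ i A, A ∉ G i → f i A = 0 := fun i A h =>
    Metric.infDist_zero_of_mem ⟨A, h, rfl⟩
  have hfU : ∀ i A, A ∉ U i → f i A = 0 := fun i A h => hfz i A fun h' => h (hGU i h')
  have hne : ∀ i, (Θ '' (G i)ᶜ).Nonempty := by
    intro i
    apply Set.Nonempty.image
    fin_cases i
    · exact ⟨sing q, fun h => hUq (sing q) rfl (hGU _ h)⟩
    · exact ⟨sing q, fun h => hUs _ (hGU _ h)⟩
    · exact ⟨sing p, fun h => hUp (sing p) rfl (hGU _ h)⟩
  have hfsome : ∀ A, ∃ i, f i A ≠ 0 := by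
    intro A
    obtain ⟨_, ⟨i, rfl⟩, h⟩ := hleb A
    refine ⟨i, fun h0 => ?_⟩
    have h1 : Metric.infDist (Θ A) (Θ '' (G i)ᶜ) < ε := by
      have : f i A < ε := by rw [h0]; exact hε
      exact this
    rw [Metric.infDist_lt_iff (hne i)] at h1
    obtain ⟨_, ⟨B, hB, rfl⟩, hd⟩ := h1
    apply hB
    apply h
    intro ξ hξ
    have := (dist_pi_lt_iff hε).1 hd ⟨ξ, hξ⟩
    rw [dist_comm] at this
    exact this
  have hsat : ∀ {x : X} {A B : Subcontinua X}, x ∈ A.1 → x ∈ B.1 → sm S A = sm S B →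
      ∀ i, f i A = f i B := by
    intro x A B hA hB he i
    have := (ctrl_sm S).eq_of_meet hhi hA hB he
    have e : Θ A = Θ B := funext fun ξ => this ξ.1 ξ.2
    simp only [f, e]
  let lv : unitInterval × X → ℝ := fun z => (1 - z.1) * sm S top + z.1 * sm S (sing z.2)
  have hlv : Continuous lv := by
    have := (continuous_sm S).comp (continuous_sing (X := X))
    have h2 : Continuous fun z : unitInterval × X => sm S (sing z.2) := this.comp continuous_snd
    have h3 : Continuous fun z : unitInterval × X => (z.1 : ℝ) := by fun_prop
    exact ((continuous_const.sub h3).mul continuous_const).add (h3.mul h2)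
  have hex : ∀ z : unitInterval × X, ∃ B : Subcontinua X, z.2 ∈ B.1 ∧ sm S B = lv z := by
    intro z
    have h1 := mono_sm S (sing z.2) top (le_top _)
    have h2 := z.1.2.1
    have h3 := z.1.2.2
    obtain ⟨B, hB, hB'⟩ := exists_level hhi (continuous_sm S) (mono_sm S) (A := sing z.2) (s := lv z)
      (by simp only [lv]; nlinarith) (by simp only [lv]; nlinarith)
    exact ⟨B, hB rfl, hB'⟩
  choose b hb1 hb2 using hex
  have hF : ∀ i, Continuous fun z => f i (b z) := by
    intro i
    rw [← continuousOn_univ]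
    apply continuousOn_of_rel (R := {r : (unitInterval × X) × Subcontinua X | r.1.2 ∈ r.2.1} ∩
      {r | sm S r.2 = lv r.1}) _ (hf i)
    · exact fun z _ => ⟨b z, hb1 z, hb2 z⟩
    · rintro z - B ⟨h1, h2⟩
      have h2 : sm S B = lv z := h2
      exact hsat h1 (hb1 z) (h2.trans (hb2 z).symm) i
    · apply IsClosed.inter
      · exact isClosed_mem.preimage
          ((continuous_snd.comp continuous_fst).prodMk continuous_snd)
      · exact isClosed_eq ((continuous_sm S).comp continuous_snd) (hlv.comp continuous_fst)
  have htop : ∀ i x, f i (b (0, x)) = f i top := fun i x =>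
    hsat (hb1 (0, x)) (mem_univ _) (by rw [hb2]; simp [lv]) i
  refine no_lift p q (fun i z => f i (b z)) hF (fun i z => Metric.infDist_nonneg)
    (fun z => hfsome _) (fun z => ?_) (fun i x y => ?_) (fun x => ?_) (fun x => ?_) (fun t => ?_)
    (fun t => ?_) (fun x => ?_)
  · obtain ⟨j, hj⟩ := hG3 (b z)
    exact ⟨j, hfz _ _ hj⟩
  · simp only [htop]
  · simp only [htop]
    exact hfU _ _ (hUq _ (mem_univ _))
  · simp only [htop]
    exact hfU _ _ (hUp _ (mem_univ _))
  · exact hfU _ _ (hUp _ (hb1 (t, p)))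
  · exact hfU _ _ (hUq _ (hb1 (t, q)))
  · have := hsat (hb1 (1, x)) (B := sing x) rfl (by rw [hb2]; simp [lv]) 1
    simp only [this]
    exact hfU _ _ (hUs x)

theorem CovDimLE.mono {Y : Type u} [TopologicalSpace Y] {m n : ℕ} (h : CovDimLE Y m) (hmn : m ≤ n) :
    CovDimLE Y n := by
  intro U hU hc
  obtain ⟨V, h1, h2, h3, h4⟩ := h U hU hc
  exact ⟨V, h1, h2, h3, fun x => (h4 x).trans (by omega)⟩

theorem covDim_le {Y : Type u} [TopologicalSpace Y] {n : ℕ} (h : CovDimLE Y n) : covDim Y ≤ n :=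
  sInf_le ⟨n, h, rfl⟩

theorem covDimLE_zero {Y : Type u} [TopologicalSpace Y] [Subsingleton Y] [Nonempty Y] :
    CovDimLE Y 0 := by
  intro U _ hc
  obtain ⟨y⟩ := ‹Nonempty Y›
  have : y ∈ ⋃₀ U := by rw [hc.2]; trivial
  obtain ⟨u, hu, hy⟩ := this
  refine ⟨{univ}, finite_singleton _, ⟨by simp, by simp⟩, ?_, fun x => ?_⟩
  · rintro v rfl
    refine ⟨u, hu, fun z _ => ?_⟩
    rwa [Subsingleton.elim z y]
  · refine (Set.ncard_le_ncard (t := {univ}) (fun v hv => hv.1) (finite_singleton _)).trans ?_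
    simp

theorem final (hdim : covDim X = 1) (hhi : HereditarilyIndecomposable X) :
    covDim (Subcontinua X) = 2 ∨ ¬ IsCSpace (Subcontinua X) := by
  by_cases hC : IsCSpace (Subcontinua X)
  · left
    have hnt : ∃ p q : X, p ≠ q := by
      by_contra! h
      have : Subsingleton X := ⟨h⟩
      have := covDim_le (covDimLE_zero (Y := X))
      rw [hdim] at this
      simp at this
    obtain ⟨p, q, hpq⟩ := hnt
    apply le_antisymm
    · exact covDim_le (upper hhi hC)
    · apply le_sInf
      rintro _ ⟨n, hn, rfl⟩
      have h2 : 2 ≤ n := by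
        by_contra! h
        exact lower hhi hpq (CovDimLE.mono hn (by omega))
      change (2 : ℕ∞) ≤ (n : ℕ∞)
      exact_mod_cast h2
  · exact Or.inr hC

end HS

/-- If `X` is a `1`-dimensional hereditarily indecomposable Hausdorff
continuum, then either `C(X)` has covering dimension `2` or `C(X)` is not a C-space. -/
theorem hyperspace_dim_two_or_not_cSpace (X : Type u) [TopologicalSpace X]
    [CompactSpace X] [T2Space X] [ConnectedSpace X] (hdim : covDim X = 1)
    (hhi : HereditarilyIndecomposable X) :
    covDim (Subcontinua X) = 2 ∨ ¬ IsCSpace (Subcontinua X) := by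
  exact HS.final hdim hhi
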